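/- Let K = ℚ(A) be the field of rational functions over ℚ, and regard s = X² − 2(A+1)·X + (A−1)², w = X − (A+1) and the recursively defined polynomials Q_k (with Q_1 = −(X³ − (3A−1)(A−3)·X + 2(A+1)(A−1)²)/4 and Q_{k+1} = (3(k+1)·X·w − s)·Q_k − X·s·Q_k′ − X·∑_{j=1}^{k−1} Q_j·Q_{k−j}) as elements of K[X]. Then for every k ≥ 1: (i) there is exactly one polynomial P ∈ K[X] satisfying s·P′ − 3(2k−1)·w·P = Q_{2k−1}; its degree in X is exactly 6k−3, all its coefficients lie in the subring ℚ[A, A^{−1}], and its leading coefficient equals (2^{1−2k} − 1)·B_{2k}·(1 + A^{1−2k})/(4k(2k−1)), where B_{2k} is the 2k-th Bernoulli number; and (ii) there is exactly one polynomial P ∈ K[X] of degree < 6k satisfying s·P′ − 6k·w·P = Q_{2k}; its degree in X is exactly 4k and all its coefficients lie in ℚ[A]. -/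

import Mathlib

open Polynomial

/-- The indeterminate `A`, as an element of the coefficient ring `ℚ[A]`. -/
noncomputable def Av : Polynomial ℚ := X

/-- `s = X² − 2(A+1)X + (A−1)² ∈ ℚ[A][X]`. -/
noncomputable def sLag : Polynomial (Polynomial ℚ) :=
  X ^ 2 - C (2 * (Av + 1)) * X + C ((Av - 1) ^ 2)

/-- `w = X − (A+1) ∈ ℚ[A][X]`. -/
noncomputable def wLag : Polynomial (Polynomial ℚ) := X - C (Av + 1)

/-- The polynomials `Q_k ∈ ℚ[A][X]`:
`Q_1 = −(X³ − (3A−1)(A−3)X + 2(A+1)(A−1)²)/4` and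
`Q_{k+1} = (3(k+1)·X·w − s)·Q_k − X·s·Q_k′ − X·∑_{j=1}^{k−1} Q_j·Q_{k−j}`. -/
noncomputable def QLag : ℕ → Polynomial (Polynomial ℚ)
  | 0 => 0
  | 1 => (-(1 : ℚ) / 4) •
      (X ^ 3 - C ((3 * Av - 1) * (Av - 3)) * X + C (2 * (Av + 1) * (Av - 1) ^ 2))
  | (k + 2) =>
      ((3 * ((k : ℚ) + 2)) • (X * wLag) - sLag) * QLag (k + 1)
        - X * sLag * derivative (QLag (k + 1))
        - X * ∑ j ∈ (Finset.Ico 1 (k + 1)).attach, QLag j.1 * QLag (k + 1 - j.1)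
  decreasing_by
    all_goals try (have hj := Finset.mem_Ico.mp j.2)
    all_goals omega

/-- The field `K = ℚ(A)` of rational functions. -/
abbrev KA : Type := RatFunc ℚ

/-- The element `A` of `K = ℚ(A)`. -/
noncomputable def AK : KA := algebraMap (Polynomial ℚ) KA Polynomial.X

/-- The embedding `ℚ[A][X] → K[X]`. -/
noncomputable def toKA (P : Polynomial (Polynomial ℚ)) : Polynomial KA :=
  P.map (algebraMap (Polynomial ℚ) KA)

/-!
The expression `s P' - n w P` is the numerator of `d/dX (P / s ^ (n / 2))`. For odd `n` it acts
triangularly on the powers of `w`, hence bijectively on polynomials of degree at most `n` as soon as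
`A` is a unit; solving over `ℚ[T;T⁻¹]` and specializing `T` to `A` gives the shape of the
coefficients.

For the leading coefficients, expand at `X = ∞`. The series with coefficients
`Q_m / s ^ (3 m / 2 + 1)` yields a solution `V` of the Riccati equation
`2ħ V' + V² = s/X² - ħ²/X²`, and `V(A + ħ)` and `V(A)` are tied by a ladder relation
`(V(A + ħ) + 1 + (A - 1)/X) (1 + (A - 1 + ħ)/X - V(A)) = 2 (2A + ħ)/X`.
Differentiating its logarithm in `A` and integrating in `X` produces, for a series `f` built from
the second `A`-derivatives of the leading coefficients, the shift equation
`(exp (ħ ∂_A) - 1) f = ħ ∂_A (1 / (2A + ħ))`, which the Bernoulli series solves. The constant of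
integration vanishes because both sides change sign under `√s ↦ -√s` and `√s` is irrational. This
determines each leading coefficient up to the kernel of `∂_A ^ 3`, and the symmetry `A ↔ 1/A` coming
from homogeneity removes that ambiguity and produces the factor `1 + A ^ (-m)`.

For even indices, `1 + 2 X ∑ Q_m τ ^ (m + 1)`, summed over odd `m`, satisfies a linear equation that
makes its logarithmic `τ`-derivative an explicit generating series of solutions, of degree `4k`.
-/

namespace Laguerre

open Finset.HasAntidiagonal
open scoped PowerSeries

section Derivations

variable {R M : Type*} [CommRing R] [CommRing M] [Algebra R M]

/-- The coefficientwise extension of a derivation of `M` to `M⟦X⟧`. -/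
noncomputable def coeffDeriv (D : Derivation R M M) : Derivation R M⟦X⟧ M⟦X⟧ :=
  Derivation.mk'
    { toFun := fun F => PowerSeries.mk fun n => D (PowerSeries.coeff n F)
      map_add' := by intro F G; ext n; simp
      map_smul' := by intro c F; ext n; simp }
    (by
      intro F G
      ext n
      simp only [LinearMap.coe_mk, AddHom.coe_mk, PowerSeries.coeff_mk, PowerSeries.coeff_mul,
        map_sum, map_add, smul_eq_mul, Derivation.leibniz, Finset.sum_add_distrib]
      congr 1
      rw [← Finset.Nat.sum_antidiagonal_swap]
      rfl)

@[simp] lemma coeff_coeffDeriv (D : Derivation R M M) (F : M⟦X⟧) (n : ℕ) :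
    PowerSeries.coeff n (coeffDeriv D F) = D (PowerSeries.coeff n F) := by
  simp [coeffDeriv]

@[simp] lemma coeffDeriv_C (D : Derivation R M M) (a : M) :
    coeffDeriv D (PowerSeries.C a) = PowerSeries.C (D a) := by
  ext n
  simp only [coeff_coeffDeriv, PowerSeries.coeff_C]
  split_ifs <;> simp

@[simp] lemma coeffDeriv_X (D : Derivation R M M) : coeffDeriv D (PowerSeries.X : M⟦X⟧) = 0 := by
  ext n
  simp only [coeff_coeffDeriv, PowerSeries.coeff_X]
  split_ifs <;> simp

lemma coeffDeriv_X_mul (D : Derivation R M M) (F : M⟦X⟧) :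
    coeffDeriv D (PowerSeries.X * F) = PowerSeries.X * coeffDeriv D F := by
  rw [Derivation.leibniz, coeffDeriv_X, smul_zero, add_zero, smul_eq_mul]

@[simp] lemma constantCoeff_coeffDeriv (D : Derivation R M M) (F : M⟦X⟧) :
    PowerSeries.constantCoeff (coeffDeriv D F) = D (PowerSeries.constantCoeff F) := by
  simp only [← PowerSeries.coeff_zero_eq_constantCoeff_apply, coeff_coeffDeriv]

lemma coeffDeriv_comm {D E : Derivation R M M} (h : ∀ a, D (E a) = E (D a)) (F : M⟦X⟧) :
    coeffDeriv D (coeffDeriv E F) = coeffDeriv E (coeffDeriv D F) := by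
  ext n
  simp only [coeff_coeffDeriv, h]

lemma map_coeffDeriv {N : Type*} [CommRing N] [Algebra R N] {D : Derivation R M M}
    {D' : Derivation R N N} {f : M →+* N} (h : ∀ a, f (D a) = D' (f a)) (F : M⟦X⟧) :
    PowerSeries.map f (coeffDeriv D F) = coeffDeriv D' (PowerSeries.map f F) := by
  ext n
  simp only [PowerSeries.coeff_map, coeff_coeffDeriv, h]

lemma eq_zero_of_mul_coeffDeriv_add_mul_eq_zero (D : Derivation R M M) {T Z W : M⟦X⟧}
    (hT : PowerSeries.X ∣ T) (hW : IsUnit (PowerSeries.constantCoeff W))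
    (h : T * coeffDeriv D Z + Z * W = 0) : Z = 0 := by
  obtain ⟨T, rfl⟩ := hT
  have hdvd : ∀ n, PowerSeries.X ^ n ∣ Z := by
    intro n
    induction n with
    | zero => simp
    | succ n ih =>
      obtain ⟨Z', rfl⟩ := ih
      have hcancel : PowerSeries.X ^ n * (PowerSeries.X * T * coeffDeriv D Z' + Z' * W) = 0 := by
        rw [Derivation.leibniz, Derivation.leibniz_pow, coeffDeriv_X] at h
        simp only [smul_eq_mul, mul_zero, smul_zero, add_zero] at h
        linear_combination h
      have hconst := congr(PowerSeries.coeff (0 + n) $hcancel)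
      rw [PowerSeries.coeff_X_pow_mul] at hconst
      simp only [PowerSeries.coeff_zero_eq_constantCoeff, map_add, map_mul,
        PowerSeries.constantCoeff_X, zero_mul, zero_add, map_zero] at hconst
      rw [pow_succ]
      exact mul_dvd_mul_left _ (PowerSeries.X_dvd_iff.mpr (hW.mul_left_eq_zero.mp hconst))
  ext n
  exact PowerSeries.X_pow_dvd_iff.mp (hdvd (n + 1)) n n.lt_succ_self

lemma coe_pow_apply_comm {D E : Derivation R M M} (h : ∀ a, D (E a) = E (D a)) (i : ℕ) (a : M) :
    D (((E : M →ₗ[R] M) ^ i) a) = ((E : M →ₗ[R] M) ^ i) (D a) := by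
  have hc : Commute (D : M →ₗ[R] M) (E : M →ₗ[R] M) := LinearMap.ext h
  exact LinearMap.congr_fun (hc.pow_right i) a

end Derivations

section OperatorCalculus

variable {R M : Type*} [CommRing R] [CommRing M] [Algebra R M]

/-- The action of `p(ħE)` on `M⟦ħ⟧`, for a power series `p` and a derivation `E` of `M` (here and
below `ħ` is the variable of the power series). -/
noncomputable def diffOp (E : Derivation R M M) (p : R⟦X⟧) : M⟦X⟧ →ₗ[R] M⟦X⟧ where
  toFun F := PowerSeries.mk fun n =>
    ∑ ij ∈ antidiagonal n, PowerSeries.coeff ij.1 p •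
      ((E : M →ₗ[R] M) ^ ij.1) (PowerSeries.coeff ij.2 F)
  map_add' F G := by ext n; simp [Finset.sum_add_distrib]
  map_smul' c F := by ext n; simp [Finset.smul_sum, smul_comm c]

lemma coeff_diffOp (E : Derivation R M M) (p : R⟦X⟧) (F : M⟦X⟧) (n : ℕ) :
    PowerSeries.coeff n (diffOp E p F) =
      ∑ ij ∈ antidiagonal n, PowerSeries.coeff ij.1 p •
        ((E : M →ₗ[R] M) ^ ij.1) (PowerSeries.coeff ij.2 F) := by
  simp [diffOp]

lemma coeff_diffOp_C (E : Derivation R M M) (p : R⟦X⟧) (a : M) (n : ℕ) :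
    PowerSeries.coeff n (diffOp E p (PowerSeries.C a)) =
      PowerSeries.coeff n p • ((E : M →ₗ[R] M) ^ n) a := by
  rw [coeff_diffOp, Finset.sum_eq_single (n, 0)]
  · simp
  · rintro ⟨i, j⟩ hij hne
    rw [mem_antidiagonal] at hij
    have : j ≠ 0 := by rintro rfl; exact hne (by simp_all)
    simp [PowerSeries.coeff_C, this]
  · simp

lemma diffOp_mul (E : Derivation R M M) (p q : R⟦X⟧) (F : M⟦X⟧) :
    diffOp E (p * q) F = diffOp E p (diffOp E q F) := by
  ext n
  simp only [coeff_diffOp, PowerSeries.coeff_mul, map_sum, Finset.sum_smul, Finset.smul_sum,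
    Finset.sum_sigma', map_smul, smul_smul]
  refine Finset.sum_nbij' (fun ⟨⟨_, j⟩, ⟨a, b⟩⟩ => ⟨(a, b + j), (b, j)⟩)
    (fun ⟨⟨a, _⟩, ⟨b, j⟩⟩ => ⟨(a + b, j), (a, b)⟩) ?_ ?_ ?_ ?_ ?_
  all_goals
    rintro ⟨⟨i, j⟩, ⟨a, b⟩⟩ h
    simp only [Finset.mem_sigma, mem_antidiagonal] at h ⊢
    obtain ⟨rfl, rfl⟩ := h
  · simp [add_assoc]
  · simp [add_assoc]
  · rfl
  · rfl
  · rw [pow_add]; rfl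

lemma diffOp_sub (E : Derivation R M M) (p q : R⟦X⟧) (F : M⟦X⟧) :
    diffOp E (p - q) F = diffOp E p F - diffOp E q F := by
  ext n
  simp only [coeff_diffOp, map_sub, sub_smul, Finset.sum_sub_distrib]

@[simp] lemma diffOp_one (E : Derivation R M M) (F : M⟦X⟧) : diffOp E 1 F = F := by
  ext n
  rw [coeff_diffOp, Finset.sum_eq_single (0, n)]
  · simp
  · rintro ⟨i, j⟩ hij hne
    rw [mem_antidiagonal] at hij
    have : i ≠ 0 := by rintro rfl; exact hne (by simp_all)
    simp [PowerSeries.coeff_one, this]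
  · simp

@[simp] lemma diffOp_X (E : Derivation R M M) (F : M⟦X⟧) :
    diffOp E PowerSeries.X F = PowerSeries.X * coeffDeriv E F := by
  ext n
  cases n with
  | zero => simp [coeff_diffOp]
  | succ n =>
    rw [coeff_diffOp, PowerSeries.coeff_succ_X_mul, coeff_coeffDeriv,
      Finset.sum_eq_single (1, n)]
    · simp
    · rintro ⟨i, j⟩ hij hne
      rw [mem_antidiagonal] at hij
      have : i ≠ 1 := by rintro rfl; exact hne (Prod.ext rfl (by simp at hij ⊢; omega))
      simp [PowerSeries.coeff_X, this]
    · simp [add_comm 1 n]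

lemma diffOp_rescale (E : Derivation R M M) (c : R) (p : R⟦X⟧) (F : M⟦X⟧) :
    diffOp E (PowerSeries.rescale c p) F = diffOp (c • E) p F := by
  ext n
  simp only [coeff_diffOp, PowerSeries.coeff_rescale, Derivation.coe_smul_linearMap,
    _root_.smul_pow, LinearMap.smul_apply, smul_smul, mul_comm]

lemma coeffDeriv_diffOp {D E : Derivation R M M} (h : ∀ a, D (E a) = E (D a)) (p : R⟦X⟧)
    (F : M⟦X⟧) : coeffDeriv D (diffOp E p F) = diffOp E p (coeffDeriv D F) := by
  ext n
  simp only [coeff_coeffDeriv, coeff_diffOp, map_sum, Derivation.map_smul, coe_pow_apply_comm h]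

lemma map_diffOp {N : Type*} [CommRing N] [Algebra R N] {E : Derivation R M M}
    {E' : Derivation R N N} {f : M →ₐ[R] N} (h : ∀ a, f (E a) = E' (f a)) (p : R⟦X⟧) (F : M⟦X⟧) :
    PowerSeries.map (f : M →+* N) (diffOp E p F) =
      diffOp E' p (PowerSeries.map (f : M →+* N) F) := by
  have hpow : ∀ (i : ℕ) (a : M),
      f (((E : M →ₗ[R] M) ^ i) a) = ((E' : N →ₗ[R] N) ^ i) (f a) := by
    intro i
    induction i with
    | zero => exact fun _ => rfl
    | succ i ih => intro a; simp only [pow_succ, Module.End.mul_apply, ih]; exact congrArg _ (h a)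
  ext n
  simp only [PowerSeries.coeff_map, coeff_diffOp, RingHom.coe_coe, map_sum, map_smul, hpow]

end OperatorCalculus

section TaylorShift

variable {M : Type*} [CommRing M] [Algebra ℚ M]

lemma derivative_diffOp_exp (E : Derivation ℚ M M) (F : M⟦X⟧) :
    d⁄dX M (diffOp E (PowerSeries.exp ℚ) F) =
      diffOp E (PowerSeries.exp ℚ) (d⁄dX M F + coeffDeriv E F) := by
  ext n
  have hfirst : ∑ ij ∈ antidiagonal (n + 1), ((ij.2 : ℚ) * (1 / (ij.1.factorial : ℚ))) •
        ((E : M →ₗ[ℚ] M) ^ ij.1) (PowerSeries.coeff ij.2 F) =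
      ∑ ij ∈ antidiagonal n, (1 / (ij.1.factorial : ℚ)) •
        ((E : M →ₗ[ℚ] M) ^ ij.1) (PowerSeries.coeff ij.2 (d⁄dX M F)) := by
    rw [Finset.Nat.sum_antidiagonal_succ']
    simp only [Nat.cast_zero, zero_mul, zero_smul, zero_add]
    refine Finset.sum_congr rfl fun ij _ => ?_
    have : PowerSeries.coeff ij.2 (d⁄dX M F) =
        ((ij.2 + 1 : ℕ) : ℚ) • PowerSeries.coeff (ij.2 + 1) F := by
      rw [PowerSeries.coeff_derivative, Algebra.smul_def, map_natCast, mul_comm]; push_cast; rfl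
    rw [this, map_smul, smul_smul, mul_comm]
  have hsecond : ∑ ij ∈ antidiagonal (n + 1), ((ij.1 : ℚ) * (1 / (ij.1.factorial : ℚ))) •
        ((E : M →ₗ[ℚ] M) ^ ij.1) (PowerSeries.coeff ij.2 F) =
      ∑ ij ∈ antidiagonal n, (1 / (ij.1.factorial : ℚ)) •
        ((E : M →ₗ[ℚ] M) ^ ij.1) (PowerSeries.coeff ij.2 (coeffDeriv E F)) := by
    rw [Finset.Nat.sum_antidiagonal_succ]
    simp only [Nat.cast_zero, zero_mul, zero_smul, zero_add]
    refine Finset.sum_congr rfl fun ij _ => ?_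
    rw [coeff_coeffDeriv, pow_succ, Module.End.mul_apply, Nat.factorial_succ]
    congr 1
    push_cast
    field_simp
  rw [map_add, map_add, PowerSeries.coeff_derivative]
  simp only [coeff_diffOp, PowerSeries.coeff_exp, eq_ratCast, Rat.cast_id]
  rw [← hfirst, ← hsecond, ← Finset.sum_add_distrib, Finset.sum_mul]
  refine Finset.sum_congr rfl fun ij hij => ?_
  rw [mem_antidiagonal] at hij
  rw [← add_smul, ← add_mul, ← Nat.cast_add, add_comm ij.2, hij, mul_smul, mul_comm,
    Algebra.smul_def ((n + 1 : ℕ) : ℚ), map_natCast]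
  push_cast
  rfl

lemma constantCoeff_diffOp (E : Derivation ℚ M M) (p : ℚ⟦X⟧) (F : M⟦X⟧) :
    PowerSeries.constantCoeff (diffOp E p F) =
      PowerSeries.constantCoeff p • PowerSeries.constantCoeff F := by
  rw [← PowerSeries.coeff_zero_eq_constantCoeff_apply, coeff_diffOp]
  simp

lemma diffOp_exp_mul (E : Derivation ℚ M M) (F G : M⟦X⟧) :
    diffOp E (PowerSeries.exp ℚ) (F * G) =
      diffOp E (PowerSeries.exp ℚ) F * diffOp E (PowerSeries.exp ℚ) G := by
  ext n
  induction n generalizing F G with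
  | zero => simp [constantCoeff_diffOp]
  | succ n ih =>
    have hder : PowerSeries.coeff n (d⁄dX M (diffOp E (PowerSeries.exp ℚ) (F * G))) =
        PowerSeries.coeff n
          (d⁄dX M (diffOp E (PowerSeries.exp ℚ) F * diffOp E (PowerSeries.exp ℚ) G)) := by
      rw [derivative_diffOp_exp, (d⁄dX M).leibniz (diffOp E _ F), derivative_diffOp_exp,
        derivative_diffOp_exp, smul_eq_mul, smul_eq_mul, map_add _ (_ * _),
        ← ih, ← ih, ← map_add, ← map_add]
      congr 2
      simp only [Derivation.leibniz, smul_eq_mul]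
      ring
    rw [PowerSeries.coeff_derivative, PowerSeries.coeff_derivative] at hder
    have hunit : IsUnit ((n : M) + 1) := by
      simpa using (IsUnit.mk0 ((n : ℚ) + 1) (by positivity)).map (algebraMap ℚ M)
    exact hunit.mul_right_cancel hder

/-- The Taylor shift `exp(ħE)` of `M⟦ħ⟧`. -/
noncomputable def taylorShift (E : Derivation ℚ M M) : M⟦X⟧ →+* M⟦X⟧ where
  toFun := diffOp E (PowerSeries.exp ℚ)
  map_one' := by
    ext n
    rw [← map_one PowerSeries.C, coeff_diffOp_C]
    cases n with
    | zero => simp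
    | succ n => simp [pow_succ, PowerSeries.coeff_one]
  map_mul' := diffOp_exp_mul E
  map_zero' := map_zero _
  map_add' := map_add _

lemma taylorShift_apply (E : Derivation ℚ M M) (F : M⟦X⟧) :
    taylorShift E F = diffOp E (PowerSeries.exp ℚ) F :=
  rfl

lemma map_taylorShift {N : Type*} [CommRing N] [Algebra ℚ N] {E : Derivation ℚ M M}
    {E' : Derivation ℚ N N} {f : M →+* N} (h : ∀ a, f (E a) = E' (f a)) (F : M⟦X⟧) :
    PowerSeries.map f (taylorShift E F) = taylorShift E' (PowerSeries.map f F) :=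
  map_diffOp (f := f.toRatAlgHom) h (PowerSeries.exp ℚ) F

@[simp] lemma taylorShift_C_of_deriv_eq_zero {E : Derivation ℚ M M} {a : M} (h : E a = 0) :
    taylorShift E (PowerSeries.C a) = PowerSeries.C a := by
  ext n
  rw [taylorShift_apply, coeff_diffOp_C]
  cases n with
  | zero => simp
  | succ n => simp [pow_succ, h]

lemma taylorShift_C_of_deriv_eq_algebraMap {E : Derivation ℚ M M} {a : M} {c : ℚ}
    (h : E a = algebraMap ℚ M c) :
    taylorShift E (PowerSeries.C a) = PowerSeries.C a + c • PowerSeries.X := by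
  ext n
  rw [taylorShift_apply, coeff_diffOp_C, map_add, PowerSeries.coeff_smul]
  rcases n with _ | _ | n
  · simp
  · simp [h, Algebra.smul_def]
  · simp [pow_succ, h, PowerSeries.coeff_X]

@[simp] lemma taylorShift_X (E : Derivation ℚ M M) :
    taylorShift E PowerSeries.X = PowerSeries.X := by
  ext n
  rw [taylorShift_apply, coeff_diffOp, Finset.sum_eq_single (0, n)]
  · simp
  · rintro ⟨i, j⟩ hij hne
    obtain ⟨i, rfl⟩ := Nat.exists_eq_succ_of_ne_zero
      (show i ≠ 0 by rintro rfl; exact hne (by simp_all))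
    have hE : E (PowerSeries.coeff j (PowerSeries.X : M⟦X⟧)) = 0 := by
      rw [PowerSeries.coeff_X]
      split_ifs <;> simp
    simp [pow_succ, hE]
  · simp

end TaylorShift

section EvalNeg

variable {R M : Type*} [CommRing R] [CommRing M] [Algebra R M]

@[simp] lemma coeff_evalNegHom (F : M⟦X⟧) (n : ℕ) :
    PowerSeries.coeff n (PowerSeries.evalNegHom F) = (-1) ^ n * PowerSeries.coeff n F :=
  PowerSeries.coeff_rescale _ _ _

lemma coeffDeriv_evalNegHom (D : Derivation R M M) (F : M⟦X⟧) :
    coeffDeriv D (PowerSeries.evalNegHom F) = PowerSeries.evalNegHom (coeffDeriv D F) := by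
  ext n
  rcases n.even_or_odd with hn | hn <;> simp [hn.neg_one_pow]

@[simp] lemma evalNegHom_C (a : M) :
    PowerSeries.evalNegHom (PowerSeries.C a) = PowerSeries.C a := by
  ext n
  rcases n with _ | n <;> simp [PowerSeries.coeff_C]

end EvalNeg

section Riccati

variable {M : Type*} [CommRing M] [Algebra ℚ M]

/-- Commuting derivations `D = d/dX` and `E = ∂/∂A`, written in the coordinates `A` and
`y = 1/X`. -/
structure IsFrame (D E : Derivation ℚ M M) (A y : M) : Prop where
  comm : ∀ a, D (E a) = E (D a)
  D_A : D A = 0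
  E_A : E A = 1
  D_y : D y = -y ^ 2
  E_y : E y = 0

/-- The polynomial `s / X²` in `y = 1/X`. -/
def sInfty (A y : M) : M := 1 - 2 * (A + 1) * y + (A - 1) ^ 2 * y ^ 2

/-- The Riccati equation of the Laguerre ladder, `2ħ V' + V² = s/X² - ħ²/X²`. -/
def IsRiccati (D : Derivation ℚ M M) (A y : M) (V : M⟦X⟧) : Prop :=
  2 * PowerSeries.X * coeffDeriv D V + V ^ 2 =
    PowerSeries.C (sInfty A y) - PowerSeries.X ^ 2 * PowerSeries.C (y ^ 2)

/-- `1 + (A - 1)/X`, the leading term of the factors of the ladder relation. -/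
def ladderBase (A y : M) : M := 1 + (A - 1) * y

/-- The left factor `V(A + ħ) + 1 + (A - 1)/X` of the ladder relation. -/
noncomputable def raise (E : Derivation ℚ M M) (A y : M) (V : M⟦X⟧) : M⟦X⟧ :=
  taylorShift E V + PowerSeries.C (ladderBase A y)

/-- The right factor `1 + (A - 1 + ħ)/X - V(A)` of the ladder relation. -/
noncomputable def lower (A y : M) (V : M⟦X⟧) : M⟦X⟧ :=
  PowerSeries.C (ladderBase A y) + PowerSeries.X * PowerSeries.C y - V

/-- The series `2A + ħ`. -/
noncomputable def twoCAddX (A : M) : M⟦X⟧ := 2 * PowerSeries.C A + PowerSeries.X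

variable {D E : Derivation ℚ M M} {A y : M} {V V' : M⟦X⟧}

lemma IsFrame.taylorShift_C_A (h : IsFrame D E A y) :
    taylorShift E (PowerSeries.C A) = PowerSeries.C A + PowerSeries.X := by
  rw [taylorShift_C_of_deriv_eq_algebraMap (c := 1) (by simp [h.E_A]), one_smul]

lemma IsFrame.coeffDeriv_D_twoCAddX (h : IsFrame D E A y) :
    coeffDeriv D (twoCAddX A) = 0 := by
  simp [twoCAddX, two_mul, h.D_A]

lemma IsFrame.D_ladderBase (h : IsFrame D E A y) :
    D (ladderBase A y) = -((A - 1) * y ^ 2) := by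
  simp only [ladderBase, map_add, map_sub, Derivation.leibniz, Derivation.map_one_eq_zero, h.D_A,
    h.D_y, smul_eq_mul]
  ring

lemma IsRiccati.coeffDeriv_lower (hV : IsRiccati D A y V) (h : IsFrame D E A y) :
    2 * PowerSeries.X * coeffDeriv D (lower A y V) =
      2 * twoCAddX A * PowerSeries.C y - lower A y V *
        (2 * (PowerSeries.C (ladderBase A y) + PowerSeries.X * PowerSeries.C y) - lower A y V) := by
  rw [IsRiccati, sInfty] at hV
  simp only [lower, map_sub, map_add, coeffDeriv_C, h.D_ladderBase, Derivation.leibniz,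
    coeffDeriv_X, h.D_y, smul_eq_mul]
  simp only [ladderBase, twoCAddX, map_add, map_sub, map_mul, map_one, map_neg, map_pow,
    map_ofNat] at hV ⊢
  linear_combination -hV

lemma IsRiccati.coeffDeriv_raise (hV : IsRiccati D A y V) (h : IsFrame D E A y) :
    2 * PowerSeries.X * coeffDeriv D (raise E A y V) =
      raise E A y V * (2 * PowerSeries.C (ladderBase A y) - raise E A y V) -
        2 * twoCAddX A * PowerSeries.C y := by
  have hshift := congr(taylorShift E $hV)
  have hcomm : taylorShift E (coeffDeriv D V) = coeffDeriv D (taylorShift E V) :=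
    (coeffDeriv_diffOp h.comm _ V).symm
  simp only [sInfty, map_add, map_sub, map_mul, map_one, map_pow, map_ofNat, taylorShift_X, hcomm,
    h.taylorShift_C_A, taylorShift_C_of_deriv_eq_zero h.E_y] at hshift
  simp only [raise, map_add, coeffDeriv_C, h.D_ladderBase]
  simp only [ladderBase, twoCAddX, map_add, map_sub, map_mul, map_one, map_neg, map_pow]
  linear_combination hshift

-- The difference `Z` of the two sides satisfies a homogeneous linear equation
-- `2ħ D Z + Z * W = 0`, in which `W` has leading term `2V`.
theorem IsRiccati.raise_mul_lower (hV : IsRiccati D A y V) (h : IsFrame D E A y)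
    (hV₀ : IsUnit (PowerSeries.constantCoeff V)) :
    raise E A y V * lower A y V = 2 * twoCAddX A * PowerSeries.C y := by
  refine sub_eq_zero.mp (eq_zero_of_mul_coeffDeriv_add_mul_eq_zero D (T := 2 * PowerSeries.X)
    (W := raise E A y V - lower A y V + 2 * PowerSeries.X * PowerSeries.C y)
    (Dvd.intro_left _ rfl) ?_ ?_)
  · have hW : PowerSeries.constantCoeff
        (raise E A y V - lower A y V + 2 * PowerSeries.X * PowerSeries.C y) =
        algebraMap ℚ M 2 * PowerSeries.constantCoeff V := by
      simp [raise, lower, taylorShift_apply, constantCoeff_diffOp, map_ofNat]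
      ring
    rw [hW]
    exact ((IsUnit.mk0 (2 : ℚ) two_ne_zero).map (algebraMap ℚ M)).mul hV₀
  · have hy : coeffDeriv D (2 * twoCAddX A * PowerSeries.C y) =
        -(2 * twoCAddX A * PowerSeries.C (y ^ 2)) := by
      simp only [two_mul, map_add, Derivation.leibniz, h.coeffDeriv_D_twoCAddX,
        coeffDeriv_C, h.D_y, smul_eq_mul, map_neg]
      ring
    have hraise := hV.coeffDeriv_raise h
    have hlower := hV.coeffDeriv_lower h
    rw [map_sub, hy, Derivation.leibniz, smul_eq_mul, smul_eq_mul, map_pow]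
    linear_combination raise E A y V * hlower + lower A y V * hraise

lemma IsRiccati.coeffDeriv_raise_eq_mul (hV : IsRiccati D A y V) (h : IsFrame D E A y)
    (hV₀ : IsUnit (PowerSeries.constantCoeff V)) :
    2 * PowerSeries.X * coeffDeriv D (raise E A y V) =
      raise E A y V * (V - taylorShift E V - PowerSeries.X * PowerSeries.C y) := by
  rw [hV.coeffDeriv_raise h, ← hV.raise_mul_lower h hV₀, raise, lower]
  ring

lemma IsRiccati.coeffDeriv_lower_eq_mul (hV : IsRiccati D A y V) (h : IsFrame D E A y)
    (hV₀ : IsUnit (PowerSeries.constantCoeff V)) :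
    2 * PowerSeries.X * coeffDeriv D (lower A y V) =
      lower A y V * (taylorShift E V - V - PowerSeries.X * PowerSeries.C y) := by
  rw [hV.coeffDeriv_lower h, ← hV.raise_mul_lower h hV₀, raise, lower]
  ring

/-- The mixed ladder product of two solutions of the Riccati equation. Up to a factor
`4 (2A + ħ) / X`, its square is the ratio of the values of a single function at `A + ħ` and `A`. -/
noncomputable def mixedLadder (E : Derivation ℚ M M) (A y : M) (V V' : M⟦X⟧) : M⟦X⟧ :=
  raise E A y V * lower A y V'

lemma coeffDeriv_mixedLadder (h : IsFrame D E A y) (hV : IsRiccati D A y V)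
    (hV' : IsRiccati D A y V') (hV₀ : IsUnit (PowerSeries.constantCoeff V))
    (hV'₀ : IsUnit (PowerSeries.constantCoeff V')) :
    2 * PowerSeries.X * coeffDeriv D (mixedLadder E A y V V') = -(mixedLadder E A y V V' *
      (taylorShift E (V - V') - (V - V') + 2 * PowerSeries.X * PowerSeries.C y)) := by
  have hraise := hV.coeffDeriv_raise_eq_mul h hV₀
  have hlower := hV'.coeffDeriv_lower_eq_mul h hV'₀
  rw [mixedLadder, Derivation.leibniz, smul_eq_mul, smul_eq_mul, map_sub]
  linear_combination raise E A y V * hlower + lower A y V' * hraise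

lemma mixedLadder_mul_mixedLadder (h : IsFrame D E A y) (hV : IsRiccati D A y V)
    (hV' : IsRiccati D A y V') (hV₀ : IsUnit (PowerSeries.constantCoeff V))
    (hV'₀ : IsUnit (PowerSeries.constantCoeff V')) :
    mixedLadder E A y V V' * mixedLadder E A y V' V =
      4 * twoCAddX A ^ 2 * PowerSeries.C y ^ 2 := by
  have hlad := hV.raise_mul_lower h hV₀
  have hlad' := hV'.raise_mul_lower h hV'₀
  rw [mixedLadder, mixedLadder]
  linear_combination raise E A y V' * lower A y V' * hlad + 2 * twoCAddX A * PowerSeries.C y * hlad'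

lemma IsRiccati.neg_evalNegHom (hV : IsRiccati D A y V) :
    IsRiccati D A y (-PowerSeries.evalNegHom V) := by
  have hflip := congr(PowerSeries.evalNegHom $hV)
  simp only [map_add, map_sub, map_mul, map_pow, map_ofNat, PowerSeries.evalNegHom_X,
    evalNegHom_C, ← coeffDeriv_evalNegHom] at hflip
  simp only [IsRiccati, map_neg, map_pow]
  linear_combination hflip

end Riccati

section LogDeriv

variable {R N : Type*} [CommRing R] [CommRing N] [Algebra R N] {D E : Derivation R N N}

lemma deriv_eq_of_mul_eq_one (D : Derivation R N N) {u v : N} (huv : u * v = 1) :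
    D v = -(D u * v * v) := by
  have h := congr(D $huv)
  rw [Derivation.leibniz, Derivation.map_one_eq_zero, smul_eq_mul, smul_eq_mul] at h
  linear_combination v * h - D v * huv

lemma mul_deriv_logDeriv (hDE : ∀ a, D (E a) = E (D a)) {T u v w : N} (huv : u * v = 1)
    (hT : E T = 0) (h : T * D u = u * w) : T * D (E u * v) = E w := by
  have hE := congr(E $h)
  simp only [Derivation.leibniz, smul_eq_mul, hT, mul_zero, add_zero, ← hDE] at hE
  rw [Derivation.leibniz, deriv_eq_of_mul_eq_one D huv, smul_eq_mul, smul_eq_mul]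
  linear_combination v * hE - E u * v * v * h + (E w - E u * v * w) * huv

end LogDeriv

section Polynomials

variable {R S : Type*} [CommRing R] [CommRing S]

/-- The polynomial `s` with parameter `A = a`. -/
noncomputable def sPoly (a : R) : R[X] := X ^ 2 - C (2 * (a + 1)) * X + C ((a - 1) ^ 2)

/-- The polynomial `w` with parameter `A = a`. -/
noncomputable def wPoly (a : R) : R[X] := X - C (a + 1)

/-- The polynomial `Q_m` with parameter `A = a`. -/
noncomputable def qPoly [Algebra ℚ R] (a : R) (m : ℕ) : R[X] :=
  (QLag m).map (aeval a : ℚ[X] →ₐ[ℚ] R)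

/-- The numerator `s P' - n w P` of the derivative of `P / s ^ (n / 2)`. -/
noncomputable def derivNum (a : R) (n : ℕ) : R[X] →ₗ[R] R[X] :=
  LinearMap.mulLeft R (sPoly a) ∘ₗ derivative - n • LinearMap.mulLeft R (wPoly a)

lemma derivNum_apply (a : R) (n : ℕ) (P : R[X]) :
    derivNum a n P = sPoly a * derivative P - n * (wPoly a * P) := by
  simp [derivNum]

lemma derivNum_C_mul (a r : R) (n : ℕ) (P : R[X]) :
    derivNum a n (C r * P) = C r * derivNum a n P := by
  rw [← smul_eq_C_mul, map_smul, smul_eq_C_mul]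

lemma map_sPoly (f : R →+* S) (a : R) : (sPoly a).map f = sPoly (f a) := by
  simp [sPoly, map_ofNat]

lemma map_wPoly (f : R →+* S) (a : R) : (wPoly a).map f = wPoly (f a) := by
  simp [wPoly]

lemma map_qPoly [Algebra ℚ R] [Algebra ℚ S] (f : R →ₐ[ℚ] S) (a : R) (m : ℕ) :
    (qPoly a m).map (f : R →+* S) = qPoly (f a) m := by
  rw [qPoly, qPoly, Polynomial.map_map, aeval_algHom]
  rfl

lemma map_derivNum (f : R →+* S) (a : R) (n : ℕ) (P : R[X]) :
    (derivNum a n P).map f = derivNum (f a) n (P.map f) := by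
  simp [derivNum_apply, map_sPoly, map_wPoly, derivative_map]

lemma natDegree_sPoly_le (a : R) : (sPoly a).natDegree ≤ 2 := by
  rw [sPoly]
  compute_degree

lemma natDegree_wPoly_le (a : R) : (wPoly a).natDegree ≤ 1 := by
  rw [wPoly]
  compute_degree

lemma derivative_wPoly (a : R) : derivative (wPoly a) = 1 := by
  simp [wPoly]

lemma coeff_succ_derivNum (a : R) (n j : ℕ) (P : R[X]) :
    (derivNum a n P).coeff (j + 1) = (j - n) * P.coeff j -
      (a + 1) * (2 * j + 2 - n) * P.coeff (j + 1) + (a - 1) ^ 2 * (j + 2) * P.coeff (j + 2) := by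
  have hs : sPoly a * derivative P = X * (X * derivative P) -
      C (2 * (a + 1)) * (X * derivative P) + C ((a - 1) ^ 2) * derivative P := by
    rw [sPoly]
    ring
  have hXd : ∀ i, (X * derivative P).coeff i = i * P.coeff i := by
    rintro (_ | i)
    · simp
    · rw [coeff_X_mul, coeff_derivative]
      push_cast
      ring
  rw [derivNum_apply, hs, wPoly, sub_mul, ← C_eq_natCast]
  simp only [coeff_add, coeff_sub, coeff_C_mul, coeff_X_mul, hXd, coeff_derivative]
  push_cast
  ring

lemma natDegree_derivNum_le {P : R[X]} {d : ℕ} (a : R) (n : ℕ) (hP : P.natDegree ≤ d) :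
    (derivNum a n P).natDegree ≤ d + 1 := by
  refine natDegree_le_iff_coeff_eq_zero.mpr fun j hj => ?_
  obtain ⟨j, rfl⟩ := Nat.exists_eq_succ_of_ne_zero (Nat.ne_zero_of_lt hj)
  have hzero : ∀ i, d < i → P.coeff i = 0 := fun i hi =>
    coeff_eq_zero_of_natDegree_lt (hP.trans_lt hi)
  rw [coeff_succ_derivNum, hzero j (by omega), hzero (j + 1) (by omega), hzero (j + 2) (by omega)]
  ring

lemma coeff_derivNum_of_natDegree_le {P : R[X]} {d : ℕ} (a : R) (n : ℕ) (hP : P.natDegree ≤ d) :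
    (derivNum a n P).coeff (d + 1) = (d - n) * P.coeff d := by
  rw [coeff_succ_derivNum, coeff_eq_zero_of_natDegree_lt (hP.trans_lt (by omega : d < d + 1)),
    coeff_eq_zero_of_natDegree_lt (hP.trans_lt (by omega : d < d + 2))]
  ring

lemma QLag_succ {m : ℕ} (hm : 1 ≤ m) : QLag (m + 1) =
    (3 * ((m : ℚ[X][X]) + 1) * (X * wLag) - sLag) * QLag m - X * sLag * derivative (QLag m) -
      X * ∑ ij ∈ antidiagonal m, QLag ij.1 * QLag ij.2 := by
  obtain ⟨m, rfl⟩ := Nat.exists_eq_add_of_le' hm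
  have hsum : ∑ ij ∈ antidiagonal (m + 1), QLag ij.1 * QLag ij.2 =
      ∑ j ∈ Finset.Ico 1 (m + 1), QLag j * QLag (m + 1 - j) := by
    rw [Finset.Nat.sum_antidiagonal_eq_sum_range_succ fun i j => QLag i * QLag j,
      Finset.sum_range_succ, Nat.sub_self, ← Finset.sum_range_add_sum_Ico _ (Nat.le_add_left 1 m)]
    simp [QLag]
  rw [QLag, hsum, Finset.sum_attach (Finset.Ico 1 (m + 1)) fun j => QLag j * QLag (m + 1 - j),
    Algebra.smul_def]
  simp only [map_mul, map_add, map_natCast, map_ofNat]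
  push_cast
  ring

section QPoly

variable [Algebra ℚ R] (a : R)

@[simp] lemma qPoly_zero : qPoly a 0 = 0 := by
  simp [qPoly, QLag]

lemma map_aeval_sLag : sLag.map (aeval a : ℚ[X] →ₐ[ℚ] R) = sPoly a := by
  simp [sLag, sPoly, Av, map_ofNat]

lemma map_aeval_wLag : wLag.map (aeval a : ℚ[X] →ₐ[ℚ] R) = wPoly a := by
  simp [wLag, wPoly, Av]

lemma four_mul_qPoly_one : 4 * qPoly a 1 =
    -(X ^ 3 - C ((3 * a - 1) * (a - 3)) * X + C (2 * (a + 1) * (a - 1) ^ 2)) := by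
  have h : (4 : ℚ[X][X]) * QLag 1 =
      -(X ^ 3 - C ((3 * Av - 1) * (Av - 3)) * X + C (2 * (Av + 1) * (Av - 1) ^ 2)) := by
    rw [QLag, mul_smul_comm, ← map_ofNat (algebraMap ℚ ℚ[X][X]) 4, ← Algebra.smul_def, smul_smul]
    norm_num
    ring
  have := congr(($h).map ((aeval a : ℚ[X] →ₐ[ℚ] R) : ℚ[X] →+* R))
  simpa [Av, qPoly, map_ofNat] using this

lemma qPoly_succ {m : ℕ} (hm : 1 ≤ m) : qPoly a (m + 1) =
    -(X * derivNum a (3 * (m + 1)) (qPoly a m)) - sPoly a * qPoly a m -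
      X * ∑ ij ∈ antidiagonal m, qPoly a ij.1 * qPoly a ij.2 := by
  simp only [derivNum_apply, qPoly, QLag_succ hm, Polynomial.map_sub, Polynomial.map_mul,
    Polynomial.map_sum, map_aeval_sLag, map_aeval_wLag, ← derivative_map, Polynomial.map_add,
    Polynomial.map_natCast, map_X, Polynomial.map_ofNat, Polynomial.map_one]
  push_cast
  ring

lemma natDegree_sum_antidiagonal_qPoly_le {m : ℕ}
    (h : ∀ i ≤ m, (qPoly a i).natDegree ≤ 2 * i + 1) :
    (∑ ij ∈ antidiagonal m, qPoly a ij.1 * qPoly a ij.2).natDegree ≤ 2 * m + 2 := by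
  refine natDegree_sum_le_of_forall_le _ _ fun ij hij => ?_
  rw [mem_antidiagonal] at hij
  exact natDegree_mul_le_of_le (h _ (by omega)) (h _ (by omega)) |>.trans (by omega)

lemma natDegree_qPoly_le (m : ℕ) : (qPoly a m).natDegree ≤ 2 * m + 1 := by
  induction m using Nat.strong_induction_on with | _ m ih
  rcases m with _ | _ | m
  · simp
  · refine natDegree_map_le.trans ?_
    rw [QLag]
    compute_degree
  · have hQ := ih (m + 1) (by omega)
    have hderiv : (-(X * derivNum a (3 * (m + 1 + 1)) (qPoly a (m + 1)))).natDegree ≤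
        2 * (m + 2) + 1 := by
      rw [natDegree_neg]
      exact natDegree_mul_le_of_le natDegree_X_le (natDegree_derivNum_le a _ hQ) |>.trans (by omega)
    have hs : (sPoly a * qPoly a (m + 1)).natDegree ≤ 2 * (m + 2) + 1 :=
      natDegree_mul_le_of_le (natDegree_sPoly_le a) hQ |>.trans (by omega)
    have hsum : (X * ∑ ij ∈ antidiagonal (m + 1), qPoly a ij.1 * qPoly a ij.2).natDegree ≤
        2 * (m + 2) + 1 :=
      natDegree_mul_le_of_le natDegree_X_le (natDegree_sum_antidiagonal_qPoly_le a
        fun i hi => ih i (by omega)) |>.trans (by omega)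
    rw [qPoly_succ a (by omega)]
    exact natDegree_sub_le_of_le (natDegree_sub_le_of_le hderiv hs) hsum |>.trans (by simp)

lemma coeff_qPoly_succ {m : ℕ} (hm : 1 ≤ m) : (qPoly a (m + 1)).coeff (2 * (m + 1) + 1) =
    (m + 1) * (qPoly a m).coeff (2 * m + 1) - ∑ ij ∈ antidiagonal m,
      (qPoly a ij.1).coeff (2 * ij.1 + 1) * (qPoly a ij.2).coeff (2 * ij.2 + 1) := by
  have hQ := natDegree_qPoly_le a m
  have hs : (sPoly a * qPoly a m).coeff (2 + (2 * m + 1)) = (qPoly a m).coeff (2 * m + 1) := by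
    rw [coeff_mul_add_eq_of_natDegree_le (natDegree_sPoly_le a) hQ, sPoly]
    simp only [coeff_add, coeff_sub, coeff_C_mul, coeff_X_pow, coeff_X, coeff_C]
    norm_num
  have hsum : (∑ ij ∈ antidiagonal m, qPoly a ij.1 * qPoly a ij.2).coeff (2 * m + 2) =
      ∑ ij ∈ antidiagonal m,
        (qPoly a ij.1).coeff (2 * ij.1 + 1) * (qPoly a ij.2).coeff (2 * ij.2 + 1) := by
    rw [finsetSum_coeff]
    refine Finset.sum_congr rfl fun ij hij => ?_
    rw [← coeff_mul_add_eq_of_natDegree_le (natDegree_qPoly_le a _) (natDegree_qPoly_le a _)]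
    congr 1
    rw [mem_antidiagonal] at hij
    omega
  rw [qPoly_succ a hm, show 2 * (m + 1) + 1 = 2 * m + 2 + 1 by ring, coeff_sub, coeff_sub,
    coeff_neg, coeff_X_mul, coeff_X_mul, coeff_derivNum_of_natDegree_le a _ hQ, hsum,
    show 2 * m + 2 + 1 = 2 + (2 * m + 1) by ring, hs]
  push_cast
  ring

lemma exists_coeff_qPoly {m : ℕ} (hm : 1 ≤ m) :
    ∃ c : ℚ, 0 < c ∧ (qPoly a m).coeff (2 * m + 1) = -algebraMap ℚ R c := by
  induction m using Nat.strong_induction_on with | _ m ih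
  obtain rfl | ⟨m, hm', rfl⟩ : m = 1 ∨ ∃ n, 1 ≤ n ∧ m = n + 1 :=
    hm.eq_or_lt.imp Eq.symm fun h => ⟨m - 1, by omega, by omega⟩
  · refine ⟨1 / 4, by norm_num, ?_⟩
    rw [qPoly, QLag, coeff_map]
    simp only [coeff_smul, coeff_add, coeff_sub, coeff_C_mul, coeff_X_pow, coeff_X, coeff_C]
    norm_num [Algebra.smul_def, neg_div]
  · obtain ⟨c, hc, hcoeff⟩ := ih m (by omega) hm'
    obtain ⟨d, hd, hsum⟩ : ∃ d : ℚ, 0 ≤ d ∧ ∑ ij ∈ antidiagonal m,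
        (qPoly a ij.1).coeff (2 * ij.1 + 1) * (qPoly a ij.2).coeff (2 * ij.2 + 1) =
          algebraMap ℚ R d := by
      refine Finset.sum_induction _ (fun x => ∃ d : ℚ, 0 ≤ d ∧ x = algebraMap ℚ R d) ?_
        ⟨0, le_rfl, by simp⟩ ?_
      · rintro _ _ ⟨c, hc, rfl⟩ ⟨d, hd, rfl⟩
        exact ⟨c + d, by positivity, by simp⟩
      · rintro ⟨i, j⟩ hij
        rw [mem_antidiagonal] at hij
        dsimp only at hij ⊢
        rcases Nat.eq_zero_or_pos i with rfl | hi
        · exact ⟨0, le_rfl, by simp⟩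
        rcases Nat.eq_zero_or_pos j with rfl | hj
        · exact ⟨0, le_rfl, by simp⟩
        obtain ⟨c, hc, hci⟩ := ih i (by omega) hi
        obtain ⟨d, hd, hdj⟩ := ih j (by omega) hj
        exact ⟨c * d, by positivity, by rw [hci, hdj, map_mul]; ring⟩
    refine ⟨(m + 1) * c + d, by positivity, ?_⟩
    rw [coeff_qPoly_succ a hm', hcoeff, hsum]
    simp only [map_add, map_mul, map_natCast, map_one]
    ring

lemma natDegree_qPoly [Nontrivial R] {m : ℕ} (hm : 1 ≤ m) : (qPoly a m).natDegree = 2 * m + 1 := by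
  obtain ⟨c, hc, hcoeff⟩ := exists_coeff_qPoly a hm
  refine (natDegree_qPoly_le a m).antisymm (le_natDegree_of_ne_zero ?_)
  rw [hcoeff, neg_ne_zero, _root_.map_ne_zero]
  exact hc.ne'

end QPoly
end Polynomials

section Powers

variable {R : Type*} [CommRing R]

lemma sPoly_eq (a : R) : sPoly a = wPoly a ^ 2 - C (4 * a) := by
  simp only [sPoly, wPoly, map_add, map_mul, map_sub, map_pow, map_one, map_ofNat]
  ring

lemma derivNum_wPoly_pow_succ (a : R) (n j : ℕ) : derivNum a n (wPoly a ^ (j + 1)) =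
    (((j + 1 : ℕ) : R) - n) • wPoly a ^ (j + 2) - (4 * a * (j + 1 : ℕ)) • wPoly a ^ j := by
  rw [derivNum_apply, sPoly_eq, derivative_pow, derivative_wPoly, smul_eq_C_mul, smul_eq_C_mul]
  simp
  ring

lemma natDegree_wPoly_pow_le (a : R) (j : ℕ) : (wPoly a ^ j).natDegree ≤ j :=
  (natDegree_pow_le_of_le j (natDegree_wPoly_le a)).trans (by simp)

lemma mem_degreeLT_succ {n : ℕ} {P : R[X]} : P ∈ degreeLT R (n + 1) ↔ P.natDegree ≤ n := by
  rw [mem_degreeLT, degree_lt_iff_coeff_zero, natDegree_le_iff_coeff_eq_zero]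
  rfl

lemma wPoly_pow_sub_mem_map_derivNum {a : R} {n i : ℕ} (hi : i + 1 ≤ n) :
    (((i + 1 : ℕ) : R) - n) • wPoly a ^ (i + 2) - (4 * a * (i + 1 : ℕ)) • wPoly a ^ i ∈
      (degreeLT R (n + 1)).map (derivNum a n) :=
  ⟨_, mem_degreeLT_succ.mpr ((natDegree_wPoly_pow_le a (i + 1)).trans hi),
    derivNum_wPoly_pow_succ a n i⟩

end Powers

section Solve

variable {R : Type*} [CommRing R] [Algebra ℚ R] {a : R} {n : ℕ}

lemma isUnit_natCast_sub_natCast {m n : ℕ} (h : m ≠ n) : IsUnit ((m : R) - n) := by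
  simpa using (IsUnit.mk0 ((m : ℚ) - n) (sub_ne_zero.mpr (Nat.cast_injective.ne h))).map
    (algebraMap ℚ R)

lemma isUnit_natCast_of_ne_zero {m : ℕ} (h : m ≠ 0) : IsUnit (m : R) := by
  simpa using isUnit_natCast_sub_natCast (R := R) h

lemma natDegree_derivNum (a : R) {P : R[X]} (hP : P ≠ 0) (hn : P.natDegree ≠ n) :
    (derivNum a n P).natDegree = P.natDegree + 1 := by
  refine (natDegree_derivNum_le a n le_rfl).antisymm (le_natDegree_of_ne_zero ?_)
  rw [coeff_derivNum_of_natDegree_le a n le_rfl]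
  exact (isUnit_natCast_sub_natCast hn).mul_right_eq_zero.not.mpr (leadingCoeff_ne_zero.mpr hP)

lemma eq_zero_of_derivNum_eq_zero {P : R[X]} (hn : P.degree < n)
    (h : derivNum a n P = 0) : P = 0 := by
  by_contra hP
  have := natDegree_derivNum a hP ((natDegree_lt_iff_degree_lt hP).mpr hn).ne
  rw [h, natDegree_zero] at this
  omega

lemma natDegree_le_of_natDegree_derivNum_le {P : R[X]} (h : (derivNum a n P).natDegree ≤ n) :
    P.natDegree ≤ n := by
  by_contra! hlt
  have hP : P ≠ 0 := by
    rintro rfl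
    simp at hlt
  have := natDegree_derivNum a hP hlt.ne'
  omega

lemma wPoly_pow_odd_mem_map_derivNum (hn : Odd n) {i : ℕ} (hi : 2 * i + 1 ≤ n) :
    wPoly a ^ (2 * i + 1) ∈ (degreeLT R (n + 1)).map (derivNum a n) := by
  induction i with
  | zero =>
    rw [← Submodule.smul_mem_iff_of_isUnit _ (isUnit_natCast_of_ne_zero (R := R) hn.pos.ne').neg]
    refine ⟨1, mem_degreeLT_succ.mpr (by simp), ?_⟩
    simp [derivNum_apply, smul_eq_C_mul]
  | succ i ih =>
    have hne : 2 * i + 1 + 1 ≠ n := by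
      rintro rfl
      exact Nat.not_even_iff_odd.mpr hn ⟨i + 1, by ring⟩
    rw [← Submodule.smul_mem_iff_of_isUnit _ (isUnit_natCast_sub_natCast (R := R) hne)]
    exact (Submodule.sub_mem_iff_left _ (Submodule.smul_mem _ _ (ih (by omega)))).mp
      (wPoly_pow_sub_mem_map_derivNum (a := a) (n := n) (by omega))

-- The coefficient `j + 1 - n` of `w ^ (j + 2)` vanishes at `j = n - 1`, where the descent starts.
lemma wPoly_pow_mem_map_derivNum_of_add_eq (ha : IsUnit a) {i j : ℕ} (hij : j + 1 + 2 * i = n) :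
    wPoly a ^ j ∈ (degreeLT R (n + 1)).map (derivNum a n) := by
  have hunit : ∀ j : ℕ, IsUnit (4 * a * (j + 1 : ℕ)) := fun j =>
    (IsUnit.mul (by exact_mod_cast isUnit_natCast_of_ne_zero (R := R) four_ne_zero) ha).mul
      (isUnit_natCast_of_ne_zero j.succ_ne_zero)
  induction i generalizing j with
  | zero =>
    have hrel := wPoly_pow_sub_mem_map_derivNum (a := a) (n := n) (i := j) (by omega)
    obtain rfl : j + 1 = n := hij
    rw [sub_self, zero_smul, zero_sub, Submodule.neg_mem_iff] at hrel
    exact (Submodule.smul_mem_iff_of_isUnit _ (hunit j)).mp hrel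
  | succ i ih =>
    rw [← Submodule.smul_mem_iff_of_isUnit _ (hunit j)]
    exact (Submodule.sub_mem_iff_right _ (Submodule.smul_mem _ _ (ih (by omega)))).mp
      (wPoly_pow_sub_mem_map_derivNum (by omega))

lemma wPoly_pow_mem_map_derivNum (ha : IsUnit a) (hn : Odd n) {j : ℕ} (hj : j ≤ n) :
    wPoly a ^ j ∈ (degreeLT R (n + 1)).map (derivNum a n) := by
  obtain ⟨m, rfl⟩ := hn
  obtain ⟨i, rfl⟩ | ⟨i, rfl⟩ := Nat.even_or_odd j
  · exact wPoly_pow_mem_map_derivNum_of_add_eq ha (i := m - i) (by omega)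
  · exact wPoly_pow_odd_mem_map_derivNum ⟨m, rfl⟩ hj

lemma map_derivNum_degreeLT (ha : IsUnit a) (hn : Odd n) :
    (degreeLT R (n + 1)).map (derivNum a n) = degreeLT R (n + 1) := by
  refine le_antisymm ?_ fun Q hQ => ?_
  · rintro _ ⟨P, hP, rfl⟩
    have hP : P.natDegree ≤ n := mem_degreeLT_succ.mp hP
    rw [mem_degreeLT_succ, natDegree_le_iff_coeff_eq_zero]
    intro i hi
    obtain rfl | hlt := (Nat.succ_le_of_lt hi).eq_or_lt
    · rw [Nat.succ_eq_add_one, coeff_derivNum_of_natDegree_le a n hP, sub_self, zero_mul]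
    · exact coeff_eq_zero_of_natDegree_lt ((natDegree_derivNum_le a n hP).trans_lt hlt)
  · rw [← sum_taylor_eq Q (a + 1)]
    refine Submodule.sum_mem _ fun i hi => ?_
    change C _ * wPoly a ^ i ∈ _
    rw [← smul_eq_C_mul]
    refine Submodule.smul_mem _ _ (wPoly_pow_mem_map_derivNum ha hn ?_)
    refine (le_natDegree_of_mem_supp i hi).trans ?_
    rw [natDegree_taylor]
    exact mem_degreeLT_succ.mp hQ

lemma exists_derivNum_eq (ha : IsUnit a) (hn : Odd n) {Q : R[X]} (hQ : Q.natDegree ≤ n) :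
    ∃ P : R[X], P.natDegree ≤ n ∧ derivNum a n P = Q := by
  have hmem : Q ∈ (degreeLT R (n + 1)).map (derivNum a n) := by
    rwa [map_derivNum_degreeLT ha hn, mem_degreeLT_succ]
  obtain ⟨P, hP, rfl⟩ := hmem
  exact ⟨P, mem_degreeLT_succ.mp hP, rfl⟩

lemma derivNum_injOn (ha : IsUnit a) (hn : Odd n) :
    Set.InjOn (derivNum a n) (degreeLT R (n + 1)) := by
  have : Module.Finite R (degreeLT R (n + 1)) :=
    Module.Finite.equiv (degreeLTEquiv R (n + 1)).symm
  have hmaps : ∀ P ∈ degreeLT R (n + 1), derivNum a n P ∈ degreeLT R (n + 1) := fun P hP => by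
    rw [← map_derivNum_degreeLT ha hn]
    exact Submodule.mem_map_of_mem hP
  have hinj := OrzechProperty.injective_of_surjective_endomorphism
    ((derivNum a n).restrict hmaps) fun ⟨Q, hQ⟩ => by
      obtain ⟨P, hP, rfl⟩ := exists_derivNum_eq ha hn (mem_degreeLT_succ.mp hQ)
      exact ⟨⟨P, mem_degreeLT_succ.mpr hP⟩, rfl⟩
  intro P hP P' hP' h
  exact congr_arg Subtype.val (@hinj ⟨P, hP⟩ ⟨P', hP'⟩ (Subtype.ext h))

theorem existsUnique_derivNum_eq (ha : IsUnit a) (hn : Odd n) {Q : R[X]} (hQ : Q.natDegree ≤ n) :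
    ∃! P : R[X], derivNum a n P = Q := by
  obtain ⟨P, hP, rfl⟩ := exists_derivNum_eq ha hn hQ
  refine ⟨P, rfl, fun P' hP' => ?_⟩
  dsimp only at hP'
  have hdeg := natDegree_le_of_natDegree_derivNum_le (hP' ▸ hQ)
  exact derivNum_injOn ha hn (mem_degreeLT_succ.mpr hdeg) (mem_degreeLT_succ.mpr hP) hP'

lemma natDegree_qPoly_le_three_mul (a : R) {m : ℕ} (hm : Odd m) :
    (qPoly a m).natDegree ≤ 3 * m :=
  (natDegree_qPoly_le a m).trans (by have := hm.pos; omega)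

lemma natDegree_le_of_derivNum_eq_qPoly {m : ℕ} (hm : Odd m) {P : R[X]}
    (hP : derivNum a (3 * m) P = qPoly a m) : P.natDegree ≤ 3 * m :=
  natDegree_le_of_natDegree_derivNum_le (hP ▸ natDegree_qPoly_le_three_mul a hm)

theorem existsUnique_derivNum_eq_qPoly (ha : IsUnit a) {m : ℕ} (hm : Odd m) :
    ∃! P : R[X], derivNum a (3 * m) P = qPoly a m :=
  existsUnique_derivNum_eq ha (Nat.odd_mul.mpr ⟨by decide, hm⟩) (natDegree_qPoly_le_three_mul a hm)

end Solve

section Infinity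

lemma coe_reflect_wPoly {R : Type*} [CommRing R] (a : R) :
    ((wPoly a).reflect 2 : R⟦X⟧) =
    PowerSeries.X - (PowerSeries.C a + 1) * PowerSeries.X ^ 2 := by
  rw [wPoly, reflect_sub, reflect_C, ← pow_one (X : R[X]), reflect_monomial, revAt_le one_le_two]
  simp

variable {R : Type*} [CommRing R] [Algebra ℚ R]

lemma exists_sq_eq_of_constantCoeff_eq_one (F : R⟦X⟧) (hF : PowerSeries.constantCoeff F = 1) :
    ∃ G : R⟦X⟧, G ^ 2 = F ∧ PowerSeries.constantCoeff G = 1 := by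
  have hF₀ : PowerSeries.constantCoeff (F - 1) = 0 := by simp [hF]
  have hsubst := PowerSeries.HasSubst.of_constantCoeff_zero' hF₀
  have hsq : PowerSeries.binomialSeries R (1 / 2 : ℚ) ^ 2 = 1 + PowerSeries.X := by
    rw [sq, ← PowerSeries.binomialSeries_add, add_halves]
    simpa using PowerSeries.binomialSeries_nat (A := R) (R := ℚ) 1
  refine ⟨PowerSeries.substAlgHom (R := R) hsubst (PowerSeries.binomialSeries R (1 / 2 : ℚ)),
    ?_, ?_⟩
  · rw [← map_pow, hsq, map_add, map_one, PowerSeries.substAlgHom_X]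
    ring
  · rw [PowerSeries.coe_substAlgHom, ← sub_add_cancel (PowerSeries.binomialSeries R (1 / 2 : ℚ)) 1,
      PowerSeries.subst_add hsubst, map_add]
    have hone : PowerSeries.subst (F - 1) (1 : R⟦X⟧) = 1 := by
      rw [← PowerSeries.coe_substAlgHom hsubst, map_one]
    have hzero : PowerSeries.constantCoeff (PowerSeries.subst (F - 1)
        (PowerSeries.binomialSeries R (1 / 2 : ℚ) - 1)) = 0 :=
      PowerSeries.constantCoeff_subst_eq_zero hF₀ _ (by simp)
    rw [hone, hzero, map_one, zero_add]

/-- The derivation `d/dX` on series in the coordinate `y = 1/X` at infinity. -/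
noncomputable def derivInfty (R : Type*) [CommRing R] [Algebra ℚ R] : Derivation ℚ R⟦X⟧ R⟦X⟧ :=
  -((PowerSeries.X ^ 2 : R⟦X⟧) • (d⁄dX R).restrictScalars ℚ)

@[simp] lemma derivInfty_X : derivInfty R PowerSeries.X = -PowerSeries.X ^ 2 := by
  simp [derivInfty]

@[simp] lemma derivInfty_C (r : R) : derivInfty R (PowerSeries.C r) = 0 := by
  simp [derivInfty]

lemma coeff_succ_derivInfty (F : R⟦X⟧) (n : ℕ) :
    PowerSeries.coeff (n + 1) (derivInfty R F) = -(n * PowerSeries.coeff n F) := by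
  rcases n with _ | n
  · simp [derivInfty, sq, mul_assoc]
  · simp [derivInfty, sq, mul_assoc, PowerSeries.coeff_derivative, mul_comm]

lemma derivInfty_coeffDeriv (E : Derivation ℚ R R) (F : R⟦X⟧) :
    derivInfty R (coeffDeriv E F) = coeffDeriv E (derivInfty R F) := by
  ext n
  rcases n with _ | n
  · simp [derivInfty]
  · simp [coeff_succ_derivInfty]

lemma isFrame_derivInfty {E : Derivation ℚ R R} {a : R} (ha : E a = 1) :
    IsFrame (derivInfty R) (coeffDeriv E) (PowerSeries.C a) PowerSeries.X where
  comm := derivInfty_coeffDeriv E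
  D_A := derivInfty_C a
  E_A := by simp [ha]
  D_y := derivInfty_X
  E_y := coeffDeriv_X E

variable (a : R)

lemma exists_sq_eq_sInfty : ∃ G : R⟦X⟧, G ^ 2 = sInfty (PowerSeries.C a) PowerSeries.X ∧
    PowerSeries.constantCoeff G = 1 :=
  exists_sq_eq_of_constantCoeff_eq_one _ (by simp [sInfty])

/-- The expansion `ρ` of `√s / X` at infinity with constant term `1`. -/
noncomputable def rho : R⟦X⟧ := (exists_sq_eq_sInfty a).choose

/-- The inverse of `rho`. -/
noncomputable def rhoInv : R⟦X⟧ := PowerSeries.invOfUnit (rho a) 1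

lemma rho_sq : rho a ^ 2 = sInfty (PowerSeries.C a) PowerSeries.X :=
  (exists_sq_eq_sInfty a).choose_spec.1

@[simp] lemma constantCoeff_rho : PowerSeries.constantCoeff (rho a) = 1 :=
  (exists_sq_eq_sInfty a).choose_spec.2

@[simp] lemma constantCoeff_rhoInv : PowerSeries.constantCoeff (rhoInv a) = 1 := by
  simp [rhoInv]

lemma rho_mul_rhoInv : rho a * rhoInv a = 1 :=
  PowerSeries.mul_invOfUnit _ _ (by simp)

/-- The expansion at infinity of `P / s ^ (n / 2)`, where `P` has degree at most `n`. -/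
noncomputable def atInfty (n : ℕ) : R[X] →ₗ[R] R⟦X⟧ where
  toFun P := rhoInv a ^ n * (P.reflect n : R[X])
  map_add' P Q := by simp [reflect_add, mul_add]
  map_smul' r P := by
    simp only [smul_eq_C_mul, reflect_C_mul, coe_mul, coe_C, PowerSeries.smul_eq_C_mul,
      RingHom.id_apply]
    ring

lemma atInfty_apply (n : ℕ) (P : R[X]) : atInfty a n P = rhoInv a ^ n * (P.reflect n : R[X]) :=
  rfl

variable {a} {m n : ℕ} {P Q : R[X]}

lemma atInfty_mul (hP : P.natDegree ≤ m) (hQ : Q.natDegree ≤ n) :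
    atInfty a (m + n) (P * Q) = atInfty a m P * atInfty a n Q := by
  rw [atInfty_apply, atInfty_apply, atInfty_apply, reflect_mul P Q hP hQ, coe_mul, pow_add]
  ring

lemma coe_reflect_sPoly : ((sPoly a).reflect 2 : R⟦X⟧) = rho a ^ 2 := by
  rw [rho_sq, sInfty, sPoly, reflect_add, reflect_sub, reflect_C_mul, reflect_C, reflect_monomial,
    ← pow_one (X : R[X]), reflect_monomial, revAt_le le_rfl, revAt_le one_le_two]
  simp only [coe_add, coe_sub, coe_mul, coe_C, coe_pow, coe_X]
  simp [map_ofNat]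

lemma atInfty_two_sPoly : atInfty a 2 (sPoly a) = 1 := by
  rw [atInfty_apply, coe_reflect_sPoly, ← mul_pow, mul_comm, rho_mul_rhoInv, one_pow]

lemma atInfty_sPoly_mul (hP : P.natDegree ≤ n) :
    atInfty a (n + 2) (sPoly a * P) = atInfty a n P := by
  rw [add_comm, atInfty_mul (natDegree_sPoly_le a) hP, atInfty_two_sPoly, one_mul]

lemma atInfty_succ_X_mul (hP : P.natDegree ≤ n) :
    atInfty a (n + 1) (X * P) = rhoInv a * atInfty a n P := by
  rw [add_comm, atInfty_mul natDegree_X_le hP, atInfty_apply a 1, reflect_one_X]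
  simp

lemma atInfty_succ (hP : P.natDegree ≤ n) :
    atInfty a (n + 1) P = rhoInv a * PowerSeries.X * atInfty a n P := by
  rw [add_comm, ← one_mul P, atInfty_mul (by simp) hP, atInfty_apply a 1, reflect_one, one_mul]
  simp

lemma X_mul_atInfty_succ_X_mul (hP : P.natDegree ≤ n) :
    PowerSeries.X * atInfty a (n + 1) (X * P) = atInfty a (n + 1) P := by
  rw [atInfty_succ_X_mul hP, atInfty_succ hP]
  ring

lemma rho_mul_atInfty_succ (hP : P.natDegree ≤ n) :
    rho a * atInfty a (n + 1) P = PowerSeries.X * atInfty a n P := by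
  rw [atInfty_succ hP]
  linear_combination PowerSeries.X * atInfty a n P * rho_mul_rhoInv a

lemma derivInfty_coe_reflect (hP : P.natDegree ≤ n) : derivInfty R (P.reflect n : R[X]) =
    ((derivative P).reflect n : R⟦X⟧) - (n : R⟦X⟧) * PowerSeries.X * (P.reflect n : R⟦X⟧) := by
  refine induction_with_natDegree_le (fun P => derivInfty R (P.reflect n : R[X]) =
      ((derivative P).reflect n : R⟦X⟧) - (n : R⟦X⟧) * PowerSeries.X * (P.reflect n : R⟦X⟧))
    n ?_ (fun k r _ hk => ?_) (fun P Q _ _ ihP ihQ => ?_) P hP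
  · simp
  · obtain ⟨l, rfl⟩ := Nat.exists_eq_add_of_le hk
    have hD : derivInfty R (C r * X ^ l : R[X]) =
        -((l : R⟦X⟧) * (PowerSeries.C r * PowerSeries.X ^ (l + 1))) := by
      rcases l with _ | l
      · simp
      · simp only [coe_mul, coe_C, coe_pow, coe_X, Derivation.leibniz, Derivation.leibniz_pow,
          derivInfty_C, derivInfty_X, smul_eq_mul, nsmul_eq_mul, Nat.add_sub_cancel]
        ring
    have hrefl : ((derivative (C r * X ^ k)).reflect (k + l) : R⟦X⟧) =
        (k : R⟦X⟧) * (PowerSeries.C r * PowerSeries.X ^ (l + 1)) := by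
      rcases k with _ | k
      · simp
      · rw [derivative_C_mul_X_pow, reflect_C_mul_X_pow, revAt_le (by omega),
          show k + 1 + l - (k + 1 - 1) = l + 1 by omega]
        simp only [coe_mul, coe_C, coe_pow, coe_X]
        rw [map_mul, map_natCast]
        ring
    rw [reflect_C_mul_X_pow, revAt_le hk, Nat.add_sub_cancel_left, hD, hrefl]
    push_cast
    ring
  · rw [reflect_add, coe_add, map_add, derivative_add, reflect_add, coe_add, ihP, ihQ]
    ring

lemma rho_mul_derivInfty_rho : rho a * derivInfty R (rho a) = PowerSeries.X ^ 2 *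
    (PowerSeries.C a + 1 - (PowerSeries.C a - 1) ^ 2 * PowerSeries.X) := by
  have h := congr(derivInfty R $(rho_sq a))
  simp only [sInfty, two_mul, sq, map_add, map_sub, Derivation.leibniz,
    Derivation.map_one_eq_zero, derivInfty_C, derivInfty_X, smul_eq_mul] at h
  have htwo : IsUnit (2 : R⟦X⟧) := by
    exact_mod_cast isUnit_natCast_of_ne_zero (R := R⟦X⟧) two_ne_zero
  refine htwo.mul_left_cancel ?_
  linear_combination h

lemma derivInfty_rhoInv : derivInfty R (rhoInv a) = -(rhoInv a ^ 3 * (PowerSeries.X ^ 2 *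
    (PowerSeries.C a + 1 - (PowerSeries.C a - 1) ^ 2 * PowerSeries.X))) := by
  rw [deriv_eq_of_mul_eq_one _ (rho_mul_rhoInv a), ← rho_mul_derivInfty_rho]
  linear_combination rhoInv a ^ 2 * derivInfty R (rho a) * rho_mul_rhoInv a

theorem derivInfty_atInfty (hP : P.natDegree ≤ n) :
    derivInfty R (atInfty a n P) = atInfty a (n + 2) (derivNum a n P) := by
  have hP' : (derivative P).natDegree ≤ n := (natDegree_derivative_le P).trans (by omega)
  have hw : (wPoly a).natDegree ≤ 2 := (natDegree_wPoly_le a).trans one_le_two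
  have hσ : rhoInv a ^ 2 * sInfty (PowerSeries.C a) PowerSeries.X = 1 := by
    rw [← rho_sq, ← mul_pow, mul_comm, rho_mul_rhoInv, one_pow]
  have hnum : atInfty a (n + 2) (derivNum a n P) =
      atInfty a n (derivative P) - (n : R⟦X⟧) * (rhoInv a ^ 2 * (PowerSeries.X -
        (PowerSeries.C a + 1) * PowerSeries.X ^ 2) * atInfty a n P) := by
    rw [derivNum_apply, ← nsmul_eq_mul, map_sub, map_nsmul, atInfty_sPoly_mul hP', add_comm n,
      atInfty_mul hw hP, atInfty_apply a 2, coe_reflect_wPoly, nsmul_eq_mul]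
  rw [hnum, atInfty_apply, Derivation.leibniz, Derivation.leibniz_pow, derivInfty_coe_reflect hP,
    derivInfty_rhoInv, atInfty_apply]
  rw [sInfty] at hσ
  rcases n with _ | n
  · simp
  · simp only [smul_eq_mul, nsmul_eq_mul, Nat.add_sub_cancel]
    push_cast
    linear_combination
      ((n + 1 : R⟦X⟧) * PowerSeries.X * rhoInv a ^ (n + 1) * (P.reflect (n + 1) : R[X])) * hσ

end Infinity

section RiccatiSolution

variable {R : Type*} [CommRing R] [Algebra ℚ R] (a : R)

/-- The expansion at infinity of `Q_m / s ^ (3 m / 2 + 1)`. -/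
noncomputable def qInfty (m : ℕ) : R⟦X⟧ := atInfty a (3 * m + 2) (qPoly a m)

/-- The first subleading coefficient of the Riccati solution. -/
noncomputable def riccatiOne : R⟦X⟧ := PowerSeries.X - atInfty a 2 (wPoly a)

@[simp] lemma qInfty_zero : qInfty a 0 = 0 := by
  simp [qInfty]

lemma derivInfty_rho : derivInfty R (rho a) = -(rho a * riccatiOne a) := by
  have hσ : rhoInv a ^ 2 * sInfty (PowerSeries.C a) PowerSeries.X = 1 := by
    rw [← rho_sq, ← mul_pow, mul_comm, rho_mul_rhoInv, one_pow]
  have hρ := rho_mul_derivInfty_rho (a := a)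
  rw [sInfty] at hσ
  rw [riccatiOne, atInfty_apply, coe_reflect_wPoly]
  linear_combination rho a * rhoInv a ^ 2 * hρ - derivInfty R (rho a) * (rho a * rhoInv a + 1) *
    rho_mul_rhoInv a - rho a * PowerSeries.X * hσ

lemma derivInfty_qInfty (m : ℕ) :
    derivInfty R (qInfty a m) = atInfty a (3 * m + 4) (derivNum a (3 * m + 2) (qPoly a m)) :=
  derivInfty_atInfty ((natDegree_qPoly_le a m).trans (by omega))

lemma rho_mul_qInfty_succ (m : ℕ) :
    rho a * qInfty a (m + 1) = PowerSeries.X * atInfty a (3 * m + 4) (qPoly a (m + 1)) :=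
  rho_mul_atInfty_succ ((natDegree_qPoly_le a _).trans (by omega))

lemma qInfty_mul_qInfty {i j m : ℕ} (h : i + j = m) : qInfty a i * qInfty a j =
    atInfty a (3 * m + 4) (qPoly a i * qPoly a j) := by
  rw [qInfty, qInfty, ← atInfty_mul ((natDegree_qPoly_le a _).trans (by omega))
    ((natDegree_qPoly_le a _).trans (by omega))]
  congr 2
  omega

lemma rho_mul_qInfty_add_two {m : ℕ} (hm : 1 ≤ m) :
    rho a * qInfty a (m + 1) = -(derivInfty R (qInfty a m) + riccatiOne a * qInfty a m +
      ∑ ij ∈ antidiagonal m, qInfty a ij.1 * qInfty a ij.2) := by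
  have hQ : (qPoly a m).natDegree ≤ 3 * m + 2 := (natDegree_qPoly_le a m).trans (by omega)
  have hsum : ∑ ij ∈ antidiagonal m, qInfty a ij.1 * qInfty a ij.2 =
      atInfty a (3 * m + 4) (∑ ij ∈ antidiagonal m, qPoly a ij.1 * qPoly a ij.2) := by
    rw [map_sum]
    exact Finset.sum_congr rfl fun ij hij => qInfty_mul_qInfty a (mem_antidiagonal.mp hij)
  have hw : atInfty a 2 (wPoly a) * qInfty a m = atInfty a (3 * m + 4) (wPoly a * qPoly a m) := by
    rw [qInfty, ← atInfty_mul ((natDegree_wPoly_le a).trans one_le_two) hQ]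
    congr 2
    omega
  have hnum : derivNum a (3 * (m + 1)) (qPoly a m) =
      derivNum a (3 * m + 2) (qPoly a m) - wPoly a * qPoly a m := by
    rw [derivNum_apply, derivNum_apply]
    push_cast
    ring
  have hdeg₁ : (derivNum a (3 * (m + 1)) (qPoly a m)).natDegree ≤ 3 * m + 3 :=
    (natDegree_derivNum_le a _ (natDegree_qPoly_le a m)).trans (by omega)
  have hdeg₂ : (∑ ij ∈ antidiagonal m, qPoly a ij.1 * qPoly a ij.2).natDegree ≤ 3 * m + 3 :=
    (natDegree_sum_antidiagonal_qPoly_le a fun i _ => natDegree_qPoly_le a i).trans (by omega)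
  rw [rho_mul_qInfty_succ, qPoly_succ a hm, map_sub, map_sub, map_neg, mul_sub, mul_sub, mul_neg,
    X_mul_atInfty_succ_X_mul hdeg₁, X_mul_atInfty_succ_X_mul hdeg₂, hnum, map_sub,
    atInfty_sPoly_mul hQ, ← derivInfty_qInfty, ← hw, ← hsum, ← qInfty, riccatiOne]
  ring

lemma four_mul_rho_mul_qInfty_one : 4 * (rho a * qInfty a 1) =
    -(2 * derivInfty R (riccatiOne a) + riccatiOne a ^ 2 + PowerSeries.X ^ 2) := by
  have hQ : (4 : ℕ) • qPoly a 1 = (2 : ℕ) • (sPoly a * wPoly a) -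
      X * ((5 : ℕ) • wPoly a ^ 2 - (2 : ℕ) • sPoly a) := by
    simp only [nsmul_eq_mul, Nat.cast_ofNat]
    rw [four_mul_qPoly_one, sPoly, wPoly]
    simp only [map_mul, map_sub, map_add, map_pow, map_one, map_ofNat]
    ring
  have hdeg : ((5 : ℕ) • wPoly a ^ 2 - (2 : ℕ) • sPoly a).natDegree ≤ 3 := by
    rw [sPoly, wPoly]
    compute_degree!
  have hw : (wPoly a).natDegree ≤ 2 := (natDegree_wPoly_le a).trans one_le_two
  have hwsq : atInfty a 4 (wPoly a ^ 2) = atInfty a 2 (wPoly a) ^ 2 := by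
    rw [sq, sq, ← atInfty_mul hw hw]
  have hdw : derivInfty R (atInfty a 2 (wPoly a)) =
      atInfty a 4 (sPoly a) - 2 * atInfty a 2 (wPoly a) ^ 2 := by
    rw [derivInfty_atInfty hw, derivNum_apply, derivative_wPoly, mul_one, ← sq, ← nsmul_eq_mul,
      map_sub, map_nsmul, hwsq, nsmul_eq_mul, Nat.cast_ofNat]
  have hone := rho_mul_qInfty_succ a 0
  have hfour : 4 * (PowerSeries.X * atInfty a 4 (qPoly a 1)) = 2 * (PowerSeries.X *
      atInfty a 2 (wPoly a)) - (5 * atInfty a 2 (wPoly a) ^ 2 - 2 * atInfty a 4 (sPoly a)) := by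
    have h := congr(PowerSeries.X * atInfty a 4 $hQ)
    rw [map_sub, map_nsmul, map_nsmul, mul_sub, atInfty_sPoly_mul hw, X_mul_atInfty_succ_X_mul hdeg,
      map_sub, map_nsmul, map_nsmul, hwsq] at h
    simp only [nsmul_eq_mul, Nat.cast_ofNat] at h
    linear_combination h
  rw [mul_zero, zero_add, zero_add] at hone
  rw [hone, hfour, riccatiOne, map_sub, derivInfty_X, hdw]
  ring

/-- The generating series of the `qInfty a m`. -/
noncomputable def qSeries : R⟦X⟧⟦X⟧ := PowerSeries.mk (qInfty a)

/-- The formal solution of the Riccati equation with leading term `√s / X`. -/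
noncomputable def riccatiSol : R⟦X⟧⟦X⟧ :=
  PowerSeries.C (rho a) + PowerSeries.X * (PowerSeries.C (riccatiOne a) + 2 * qSeries a)

lemma rho_mul_qSeries :
    PowerSeries.C (rho a) * qSeries a + PowerSeries.X * (coeffDeriv (derivInfty R) (qSeries a) +
      PowerSeries.C (riccatiOne a) * qSeries a + qSeries a ^ 2) =
      PowerSeries.X * PowerSeries.C (rho a * qInfty a 1) := by
  ext1 n
  rcases n with _ | n
  · simp [qSeries]
  · rw [map_add, sq, PowerSeries.coeff_succ_X_mul, PowerSeries.coeff_succ_X_mul, map_add, map_add,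
      PowerSeries.coeff_C_mul, PowerSeries.coeff_C_mul, PowerSeries.coeff_mul, coeff_coeffDeriv]
    simp only [qSeries, PowerSeries.coeff_mk]
    rcases n with _ | n
    · simp
    · rw [rho_mul_qInfty_add_two a (Nat.le_add_left 1 n), PowerSeries.coeff_C,
        if_neg n.succ_ne_zero]
      ring

theorem isRiccati_riccatiSol :
    IsRiccati (derivInfty R) (PowerSeries.C a) PowerSeries.X (riccatiSol a) := by
  have hsq := congr(PowerSeries.C $(rho_sq a))
  have hρ := congr(PowerSeries.C $(derivInfty_rho a))
  have hone := congr(PowerSeries.C $(four_mul_rho_mul_qInfty_one a))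
  have hS := rho_mul_qSeries a
  simp only [map_mul, map_neg, map_add, map_pow, map_ofNat] at hsq hρ hone hS
  rw [IsRiccati, riccatiSol]
  simp only [map_add, two_mul, Derivation.leibniz, coeffDeriv_C, coeffDeriv_X, smul_eq_mul, map_pow]
  linear_combination hsq + 2 * PowerSeries.X * hρ + 4 * PowerSeries.X * hS +
    PowerSeries.X ^ 2 * hone

lemma constantCoeff_riccatiSol : PowerSeries.constantCoeff (riccatiSol a) = rho a := by
  simp [riccatiSol]

lemma coeff_one_riccatiSol : PowerSeries.coeff 1 (riccatiSol a) = riccatiOne a := by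
  simp [riccatiSol, qSeries]

lemma coeff_add_two_riccatiSol (m : ℕ) :
    PowerSeries.coeff (m + 2) (riccatiSol a) = 2 * qInfty a (m + 1) := by
  simp [riccatiSol, qSeries, two_mul, PowerSeries.coeff_succ_X_mul]

end RiccatiSolution

section Parity

variable {R : Type*} [CommRing R] [IsDomain R] [Algebra ℚ R]

/-- The power series that are expansions of rational functions. -/
def rationalSeries (R : Type*) [CommRing R] [IsDomain R] [Algebra ℚ R] :
    Subalgebra ℚ R⟦X⟧ where
  carrier := {F | ∃ p q : R[X], p ≠ 0 ∧ F * p = q}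
  mul_mem' := by
    rintro F G ⟨p, q, hp, hpq⟩ ⟨p', q', hp', hpq'⟩
    refine ⟨p * p', q * q', mul_ne_zero hp hp', ?_⟩
    rw [coe_mul, coe_mul, ← hpq, ← hpq']
    ring
  add_mem' := by
    rintro F G ⟨p, q, hp, hpq⟩ ⟨p', q', hp', hpq'⟩
    refine ⟨p * p', q * p' + q' * p, mul_ne_zero hp hp', ?_⟩
    rw [coe_add, coe_mul, coe_mul, coe_mul, ← hpq, ← hpq']
    ring
  algebraMap_mem' r := ⟨1, C (algebraMap ℚ R r), one_ne_zero, by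
    rw [coe_one, mul_one, coe_C, PowerSeries.algebraMap_apply]⟩

lemma coe_mem_rationalSeries (p : R[X]) : (p : R⟦X⟧) ∈ rationalSeries R :=
  ⟨1, p, one_ne_zero, by simp⟩

lemma mem_rationalSeries_of_mul_coe {F : R⟦X⟧} {p : R[X]} (hp : p ≠ 0)
    (h : F * p ∈ rationalSeries R) : F ∈ rationalSeries R := by
  obtain ⟨r, q, hr, hq⟩ := h
  exact ⟨p * r, q, mul_ne_zero hp hr, by rw [coe_mul, ← mul_assoc, hq]⟩

lemma C_mem_rationalSeries (r : R) : PowerSeries.C r ∈ rationalSeries R := by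
  simpa using coe_mem_rationalSeries (C r)

lemma X_mem_rationalSeries : (PowerSeries.X : R⟦X⟧) ∈ rationalSeries R := by
  simpa using coe_mem_rationalSeries (X : R[X])

lemma coeffDeriv_coe_mem_rationalSeries (E : Derivation ℚ R R) (p : R[X]) :
    coeffDeriv E (p : R⟦X⟧) ∈ rationalSeries R := by
  induction p using Polynomial.induction_on' with
  | add p q hp hq => rw [coe_add, map_add]; exact add_mem hp hq
  | monomial n r =>
    rw [← C_mul_X_pow_eq_monomial]
    simp only [coe_mul, coe_C, coe_pow, coe_X, Derivation.leibniz, Derivation.leibniz_pow,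
      coeffDeriv_C, coeffDeriv_X, smul_eq_mul, mul_zero, smul_zero, zero_add]
    exact mul_mem (pow_mem (X_mem_rationalSeries (R := R)) n) (C_mem_rationalSeries (E r))

lemma coeffDeriv_mem_rationalSeries (E : Derivation ℚ R R) {F : R⟦X⟧}
    (hF : F ∈ rationalSeries R) : coeffDeriv E F ∈ rationalSeries R := by
  obtain ⟨p, q, hp, hpq⟩ := hF
  refine mem_rationalSeries_of_mul_coe hp ?_
  have h : coeffDeriv E F * p = coeffDeriv E q - F * coeffDeriv E p := by
    rw [← hpq, Derivation.leibniz, smul_eq_mul, smul_eq_mul]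
    ring
  rw [h]
  exact sub_mem (coeffDeriv_coe_mem_rationalSeries E q)
    (mul_mem ⟨p, q, hp, hpq⟩ (coeffDeriv_coe_mem_rationalSeries E p))

lemma coe_sInfty {R : Type*} [CommRing R] [Algebra ℚ R] (a : R) :
    ((sInfty (C a) X : R[X]) : R⟦X⟧) = rho a ^ 2 := by
  rw [rho_sq, sInfty, sInfty]
  simp only [coe_add, coe_sub, coe_mul, coe_pow, coe_C, coe_X, coe_one]
  rw [← map_ofNat C 2, coe_C, map_ofNat]

variable (a : R)

lemma sInfty_ne_zero : (sInfty (C a) X : R[X]) ≠ 0 := by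
  intro h
  have hρ := congr(PowerSeries.constantCoeff $(coe_sInfty a))
  simp [h] at hρ

lemma mem_rationalSeries_of_rho_sq_mul {F : R⟦X⟧} (h : rho a ^ 2 * F ∈ rationalSeries R) :
    F ∈ rationalSeries R := by
  rw [mul_comm, ← coe_sInfty] at h
  exact mem_rationalSeries_of_mul_coe (sInfty_ne_zero a) h

lemma mem_rationalSeries_of_two_mul {F : R⟦X⟧} (h : 2 * F ∈ rationalSeries R) :
    F ∈ rationalSeries R := by
  convert (rationalSeries R).smul_mem h (2⁻¹ : ℚ) using 1
  rw [two_mul, ← two_smul ℚ F, smul_smul, inv_mul_cancel₀ two_ne_zero, one_smul]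

/-- The pairs of series `(F, F')` exchanged by the conjugation `√s ↦ -√s`, i.e. of the form
`(f + g ρ, f - g ρ)` with `f` and `g` rational. -/
def conjPairs : Subalgebra ℚ (R⟦X⟧ × R⟦X⟧) where
  carrier := {x | x.1 + x.2 ∈ rationalSeries R ∧ rho a * (x.1 - x.2) ∈ rationalSeries R}
  mul_mem' := by
    rintro x y ⟨hx, hx'⟩ ⟨hy, hy'⟩
    have hprod : (x.1 - x.2) * (y.1 - y.2) ∈ rationalSeries R := by
      refine mem_rationalSeries_of_rho_sq_mul a ?_
      convert mul_mem hx' hy' using 1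
      ring
    constructor <;> refine mem_rationalSeries_of_two_mul ?_
    · convert add_mem (mul_mem hx hy) hprod using 1
      simp only [Prod.fst_mul, Prod.snd_mul]
      ring
    · convert add_mem (mul_mem hx hy') (mul_mem hx' hy) using 1
      simp only [Prod.fst_mul, Prod.snd_mul]
      ring
  add_mem' := by
    rintro x y ⟨hx, hx'⟩ ⟨hy, hy'⟩
    constructor
    · convert add_mem hx hy using 1
      simp only [Prod.fst_add, Prod.snd_add]
      ring
    · convert add_mem hx' hy' using 1
      simp only [Prod.fst_add, Prod.snd_add]
      ring
  algebraMap_mem' r := by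
    simp only [Set.mem_ofPred_eq, Prod.algebraMap_apply, sub_self, mul_zero]
    exact ⟨add_mem (algebraMap_mem _ r) (algebraMap_mem _ r), zero_mem _⟩

variable {a} {F F' : R⟦X⟧}

lemma mem_conjPairs : (F, F') ∈ conjPairs a ↔
    F + F' ∈ rationalSeries R ∧ rho a * (F - F') ∈ rationalSeries R :=
  Iff.rfl

lemma swap_mem_conjPairs (h : (F, F') ∈ conjPairs a) : (F', F) ∈ conjPairs a := by
  rw [mem_conjPairs] at h ⊢
  rw [add_comm, ← neg_sub, mul_neg]
  exact ⟨h.1, neg_mem h.2⟩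

lemma mk_self_mem_conjPairs (h : F ∈ rationalSeries R) : (F, F) ∈ conjPairs a := by
  rw [mem_conjPairs, sub_self, mul_zero]
  exact ⟨add_mem h h, zero_mem _⟩

lemma mk_neg_mem_conjPairs (h : rho a * F ∈ rationalSeries R) : (F, -F) ∈ conjPairs a := by
  rw [mem_conjPairs, add_neg_cancel, sub_neg_eq_add, mul_add]
  exact ⟨zero_mem _, add_mem h h⟩

lemma coeffDeriv_mem_conjPairs (E : Derivation ℚ R R) (h : (F, F') ∈ conjPairs a) :
    (coeffDeriv E F, coeffDeriv E F') ∈ conjPairs a := by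
  rw [mem_conjPairs] at h ⊢
  rw [← map_add, ← map_sub]
  refine ⟨coeffDeriv_mem_rationalSeries E h.1, ?_⟩
  have hρ : coeffDeriv E (rho a ^ 2) = 2 * rho a * coeffDeriv E (rho a) := by
    rw [sq, Derivation.leibniz, smul_eq_mul]
    ring
  refine mem_rationalSeries_of_two_mul (mem_rationalSeries_of_rho_sq_mul a ?_)
  have hleibniz : rho a ^ 2 * (2 * (rho a * coeffDeriv E (F - F'))) =
      2 * (rho a ^ 2 * coeffDeriv E (rho a * (F - F'))) -
        rho a * (F - F') * coeffDeriv E (rho a ^ 2) := by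
    rw [hρ, Derivation.leibniz, smul_eq_mul, smul_eq_mul]
    ring
  have hρ' : rho a ^ 2 ∈ rationalSeries R := coe_sInfty a ▸ coe_mem_rationalSeries _
  rw [hleibniz]
  exact sub_mem (mul_mem (ofNat_mem _ 2) (mul_mem hρ' (coeffDeriv_mem_rationalSeries E h.2)))
    (mul_mem h.2 (coeffDeriv_mem_rationalSeries E hρ'))

variable (a)

lemma rhoInv_sq_mem_rationalSeries : rhoInv a ^ 2 ∈ rationalSeries R := by
  refine mem_rationalSeries_of_rho_sq_mul a ?_
  rw [← mul_pow, rho_mul_rhoInv, one_pow]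
  exact one_mem _

lemma mk_rho_mem_conjPairs : (rho a, -rho a) ∈ conjPairs a := by
  refine mk_neg_mem_conjPairs ?_
  rw [← sq, ← coe_sInfty]
  exact coe_mem_rationalSeries _

lemma mk_atInfty_mem_conjPairs (n : ℕ) (P : R[X]) :
    (atInfty a n P, (-1) ^ n * atInfty a n P) ∈ conjPairs a := by
  have heven (k : ℕ) : rhoInv a ^ (2 * k) * (P.reflect n : R[X]) ∈ rationalSeries R :=
    mul_mem (pow_mul (rhoInv a) 2 k ▸ pow_mem (rhoInv_sq_mem_rationalSeries a) k)
      (coe_mem_rationalSeries _)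
  rw [atInfty_apply]
  obtain ⟨k, rfl | rfl⟩ := n.even_or_odd'
  · rw [(even_two_mul k).neg_one_pow, one_mul]
    exact mk_self_mem_conjPairs (heven k)
  · rw [(odd_two_mul_add_one k).neg_one_pow, neg_one_mul]
    refine mk_neg_mem_conjPairs ?_
    convert heven k using 1
    linear_combination rhoInv a ^ (2 * k) * (P.reflect (2 * k + 1) : R[X]) * rho_mul_rhoInv a

end Parity

section SqrtIrrational

lemma sInfty_ne_sq {F : Type*} [Field F] [CharZero F] {a : F} (ha : a ≠ 0) (h : F[X]) :
    (sInfty (C a) X : F[X]) ≠ h ^ 2 := by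
  intro heq
  have hs : (sInfty (C a) X : F[X]) = C ((a - 1) ^ 2) * X ^ 2 + C (-(2 * (a + 1))) * X + C 1 := by
    simp only [sInfty, map_neg, map_mul, map_add, map_sub, map_pow, map_one, map_ofNat]
    ring
  have hdeg : h.natDegree ≤ 1 := by
    have : (h ^ 2).natDegree ≤ 2 := by rw [← heq, hs]; exact natDegree_quadratic_le
    rw [natDegree_pow] at this
    omega
  obtain ⟨v, u, rfl⟩ := exists_eq_X_add_C_of_natDegree_le_one hdeg
  have hsq : (C v * X + C u) ^ 2 = C (v ^ 2) * X ^ 2 + C (2 * u * v) * X + C (u ^ 2) := by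
    simp only [map_mul, map_pow, map_ofNat]
    ring
  rw [hs, hsq] at heq
  have h₀ := congr(coeff $heq 0)
  have h₁ := congr(coeff $heq 1)
  have h₂ := congr(coeff $heq 2)
  simp only [coeff_add, coeff_C_mul, coeff_X_pow, coeff_X, coeff_C] at h₀ h₁ h₂
  norm_num at h₀ h₁ h₂
  have : 16 * a = 0 := by
    linear_combination (2 * u * v - 2 * (a + 1)) * h₁ - 4 * v ^ 2 * h₀ - 4 * h₂
  simp_all

variable {R : Type*} [CommRing R] [IsDomain R] [Algebra ℚ R] {a : R}

lemma eq_zero_of_rho_mul_coe_eq_coe (ha : a ≠ 0) {p q : R[X]} (h : rho a * p = q) : p = 0 := by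
  by_contra hp
  let f := mapRingHom (algebraMap R (FractionRing R))
  have hf : Function.Injective f :=
    map_injective _ (IsFractionRing.injective R (FractionRing R))
  have := algebraRat.charZero (FractionRing R)
  have hsq : sInfty (C a) X * p ^ 2 = q ^ 2 := by
    have := congr($h ^ 2)
    rw [mul_pow, ← coe_sInfty, ← coe_pow, ← coe_pow, ← coe_mul] at this
    exact_mod_cast this
  have hsq' := congr(f $hsq)
  have hs : f (sInfty (C a) X) = sInfty (C (algebraMap R (FractionRing R) a)) X := by
    simp [f, sInfty]
  rw [map_mul, map_pow, map_pow, hs] at hsq'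
  obtain ⟨g, hg⟩ := (IsIntegrallyClosed.pow_dvd_pow_iff two_ne_zero).mp (Dvd.intro_left _ hsq')
  refine sInfty_ne_sq (a := algebraMap R (FractionRing R) a) ?_ g ?_
  · simpa using ha
  · refine mul_right_cancel₀ (pow_ne_zero 2 ((map_ne_zero_iff f hf).mpr hp)) ?_
    rw [hsq', hg]
    ring

lemma eq_zero_of_mk_C_mul_X_sq_mem_conjPairs (ha : a ≠ 0) {c : R}
    (h : (PowerSeries.C c * PowerSeries.X ^ 2, -(PowerSeries.C c * PowerSeries.X ^ 2)) ∈
      conjPairs a) : c = 0 := by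
  obtain ⟨-, p, q, hp, hpq⟩ := h
  have hzero := eq_zero_of_rho_mul_coe_eq_coe ha (p := C (2 * c) * X ^ 2 * p) (q := q) (by
    rw [← hpq]
    simp only [coe_mul, coe_pow, coe_C, coe_X]
    rw [map_mul, map_ofNat]
    ring)
  have := algebraRat.charZero R
  simpa [hp] using hzero

end SqrtIrrational

section ConjSeries

variable {R : Type*} [CommRing R] [IsDomain R] [Algebra ℚ R]

/-- The coefficients of `F` and `F'` are exchanged by `√s ↦ -√s`. -/
def IsConjSeries (a : R) (F F' : R⟦X⟧⟦X⟧) : Prop :=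
  ∀ n, (PowerSeries.coeff n F, PowerSeries.coeff n F') ∈ conjPairs a

namespace IsConjSeries

variable {a : R} {F F' G G' : R⟦X⟧⟦X⟧}

lemma add (hF : IsConjSeries a F F') (hG : IsConjSeries a G G') :
    IsConjSeries a (F + G) (F' + G') := fun n => by
  rw [map_add, map_add]
  exact add_mem (hF n) (hG n)

lemma sub (hF : IsConjSeries a F F') (hG : IsConjSeries a G G') :
    IsConjSeries a (F - G) (F' - G') := fun n => by
  rw [map_sub, map_sub]
  exact sub_mem (hF n) (hG n)

lemma mul (hF : IsConjSeries a F F') (hG : IsConjSeries a G G') :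
    IsConjSeries a (F * G) (F' * G') := fun n => by
  rw [PowerSeries.coeff_mul, PowerSeries.coeff_mul, prod_mk_sum]
  refine sum_mem fun ij _ => ?_
  simpa only [Prod.mk_mul_mk] using mul_mem (hF ij.1) (hG ij.2)

lemma symm (hF : IsConjSeries a F F') : IsConjSeries a F' F := fun n =>
  swap_mem_conjPairs (hF n)

protected lemma coeffDeriv (E : Derivation ℚ R R) (hF : IsConjSeries a F F') :
    IsConjSeries a (coeffDeriv (coeffDeriv E) F) (coeffDeriv (coeffDeriv E) F') := fun n => by
  rw [coeff_coeffDeriv, coeff_coeffDeriv]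
  exact coeffDeriv_mem_conjPairs E (hF n)

protected lemma taylorShift (E : Derivation ℚ R R) (hF : IsConjSeries a F F') :
    IsConjSeries a (taylorShift (coeffDeriv E) F) (taylorShift (coeffDeriv E) F') := fun n => by
  have hpow (i : ℕ) {x x' : R⟦X⟧} (h : (x, x') ∈ conjPairs a) :
      (((coeffDeriv E : R⟦X⟧ →ₗ[ℚ] R⟦X⟧) ^ i) x, ((coeffDeriv E : R⟦X⟧ →ₗ[ℚ] R⟦X⟧) ^ i) x') ∈
        conjPairs a := by
    induction i with
    | zero => exact h
    | succ i ih =>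
      rw [pow_succ']
      exact coeffDeriv_mem_conjPairs E ih
  rw [taylorShift_apply, taylorShift_apply, coeff_diffOp, coeff_diffOp, prod_mk_sum]
  exact sum_mem fun ij _ => (conjPairs a).smul_mem (hpow ij.1 (hF ij.2)) _

protected lemma C {F F' : R⟦X⟧} (h : (F, F') ∈ conjPairs a) :
    IsConjSeries a (PowerSeries.C F) (PowerSeries.C F') := fun n => by
  rw [PowerSeries.coeff_C, PowerSeries.coeff_C]
  split_ifs
  · exact h
  · exact zero_mem _

lemma map_C (F : R⟦X⟧) :
    IsConjSeries a (PowerSeries.map PowerSeries.C F) (PowerSeries.map PowerSeries.C F) := by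
  intro n
  rw [PowerSeries.coeff_map]
  exact mk_self_mem_conjPairs (C_mem_rationalSeries _)

end IsConjSeries

lemma isConjSeries_X (a : R) : IsConjSeries a PowerSeries.X PowerSeries.X := by
  simpa using IsConjSeries.map_C (a := a) PowerSeries.X

lemma eq_zero_of_map_C_mul_isConjSeries {a : R} (ha : a ≠ 0) {F : R⟦X⟧}
    (h : IsConjSeries a (PowerSeries.C PowerSeries.X ^ 2 * PowerSeries.map PowerSeries.C F)
      (-(PowerSeries.C PowerSeries.X ^ 2 * PowerSeries.map PowerSeries.C F))) : F = 0 := by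
  ext n
  refine eq_zero_of_mk_C_mul_X_sq_mem_conjPairs ha ?_
  simpa only [← map_pow, map_neg, PowerSeries.coeff_C_mul, PowerSeries.coeff_map,
    mul_comm (PowerSeries.X ^ 2)] using h n

end ConjSeries

section LadderDefect

variable {R : Type*} [CommRing R] [Algebra ℚ R] (a : R)

/-- The second solution of the Riccati equation, with leading term `-√s / X`. -/
noncomputable def riccatiSol' : R⟦X⟧⟦X⟧ := -PowerSeries.evalNegHom (riccatiSol a)

lemma isRiccati_riccatiSol' :
    IsRiccati (derivInfty R) (PowerSeries.C a) PowerSeries.X (riccatiSol' a) :=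
  (isRiccati_riccatiSol a).neg_evalNegHom

lemma coeff_riccatiSol' (n : ℕ) : PowerSeries.coeff n (riccatiSol' a) =
    (-1) ^ (n + 1) * PowerSeries.coeff n (riccatiSol a) := by
  simp [riccatiSol', pow_succ]

lemma constantCoeff_riccatiSol' : PowerSeries.constantCoeff (riccatiSol' a) = -rho a := by
  rw [← PowerSeries.coeff_zero_eq_constantCoeff_apply, coeff_riccatiSol']
  simp [constantCoeff_riccatiSol]

lemma isUnit_constantCoeff_riccatiSol : IsUnit (PowerSeries.constantCoeff (riccatiSol a)) :=
  constantCoeff_riccatiSol a ▸ .of_mul_eq_one _ (rho_mul_rhoInv a)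

lemma isUnit_constantCoeff_riccatiSol' : IsUnit (PowerSeries.constantCoeff (riccatiSol' a)) := by
  rw [constantCoeff_riccatiSol', ← constantCoeff_riccatiSol, IsUnit.neg_iff]
  exact isUnit_constantCoeff_riccatiSol a

lemma isConjSeries_riccatiSol [IsDomain R] :
    IsConjSeries a (riccatiSol a) (riccatiSol' a) := by
  intro n
  rw [coeff_riccatiSol']
  rcases n with _ | _ | m
  · simpa [constantCoeff_riccatiSol] using mk_rho_mem_conjPairs a
  · rw [zero_add, coeff_one_riccatiSol, riccatiOne]
    have hw := mk_atInfty_mem_conjPairs a 2 (wPoly a)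
    have hX := mk_self_mem_conjPairs (a := a) (X_mem_rationalSeries (R := R))
    simpa using sub_mem hX hw
  · have hq : (qInfty a (m + 1), (-1) ^ (3 * (m + 1) + 2) * qInfty a (m + 1)) ∈ conjPairs a :=
      mk_atInfty_mem_conjPairs a _ _
    have hsign : (-1 : R⟦X⟧) ^ (m + 2 + 1) = (-1) ^ (3 * (m + 1) + 2) := by
      rw [show 3 * (m + 1) + 2 = m + 2 + 1 + 2 * (m + 1) by ring, pow_add _ (m + 2 + 1),
        (even_two_mul _).neg_one_pow, mul_one]
    rw [coeff_add_two_riccatiSol, hsign, two_mul, mul_add]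
    simpa only [Prod.mk_add_mk] using add_mem hq hq

variable (E : Derivation ℚ R R)

/-- The mixed ladder product of the two solutions of the Riccati equation. -/
noncomputable def ladder : R⟦X⟧⟦X⟧ :=
  mixedLadder (coeffDeriv E) (PowerSeries.C a) PowerSeries.X (riccatiSol a) (riccatiSol' a)

/-- The conjugate of `ladder`. -/
noncomputable def ladder' : R⟦X⟧⟦X⟧ :=
  mixedLadder (coeffDeriv E) (PowerSeries.C a) PowerSeries.X (riccatiSol' a) (riccatiSol a)

lemma isConjSeries_ladder [IsDomain R] : IsConjSeries a (ladder a E) (ladder' a E) := by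
  have hV := isConjSeries_riccatiSol a
  have hy : (PowerSeries.X : R⟦X⟧) ∈ rationalSeries R := X_mem_rationalSeries
  have hbase : ladderBase (PowerSeries.C a) PowerSeries.X ∈ rationalSeries R :=
    add_mem (one_mem _) (mul_mem (sub_mem (C_mem_rationalSeries a) (one_mem _)) hy)
  have hbase' := IsConjSeries.C (mk_self_mem_conjPairs (a := a) hbase)
  exact ((hV.taylorShift E).add hbase').mul
    ((hbase'.add ((isConjSeries_X a).mul (.C (mk_self_mem_conjPairs hy)))).sub hV.symm)

variable {a} in
lemma constantCoeff_atInfty (n : ℕ) (P : R[X]) :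
    PowerSeries.constantCoeff (atInfty a n P) = P.coeff n := by
  rw [atInfty_apply, map_mul, map_pow, constantCoeff_rhoInv, one_pow, one_mul,
    constantCoeff_coe, coeff_reflect, revAt_le n.zero_le, Nat.sub_zero]

lemma map_constantCoeff_riccatiSol :
    PowerSeries.map PowerSeries.constantCoeff (riccatiSol a) = 1 := by
  ext n
  rw [PowerSeries.coeff_map, PowerSeries.coeff_one]
  rcases n with _ | _ | m
  · simp [constantCoeff_riccatiSol]
  · rw [zero_add, coeff_one_riccatiSol, riccatiOne, map_sub, constantCoeff_atInfty,
      coeff_eq_zero_of_natDegree_lt ((natDegree_wPoly_le a).trans_lt one_lt_two)]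
    simp
  · rw [coeff_add_two_riccatiSol, map_mul, qInfty, constantCoeff_atInfty,
      coeff_eq_zero_of_natDegree_lt ((natDegree_qPoly_le a _).trans_lt (by omega))]
    simp

lemma map_constantCoeff_riccatiSol' :
    PowerSeries.map PowerSeries.constantCoeff (riccatiSol' a) = -1 := by
  ext n
  have h := congr(PowerSeries.coeff n $(map_constantCoeff_riccatiSol a))
  rw [PowerSeries.coeff_map] at h ⊢
  rw [coeff_riccatiSol', map_mul, h, PowerSeries.coeff_one, map_neg, PowerSeries.coeff_one]
  split_ifs with hn <;> simp [hn]

lemma map_constantCoeff_ladder :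
    PowerSeries.map PowerSeries.constantCoeff (ladder a E) = 4 := by
  rw [ladder, mixedLadder, raise, lower, map_mul, map_add, map_sub, map_add, map_mul,
    map_taylorShift (constantCoeff_coeffDeriv E), map_constantCoeff_riccatiSol,
    map_constantCoeff_riccatiSol']
  simp [ladderBase]
  norm_num

lemma exists_ladder_mul_eq_one : ∃ v, ladder a E * v = 1 := by
  refine IsUnit.exists_right_inv ?_
  rw [PowerSeries.isUnit_iff_constantCoeff, PowerSeries.isUnit_iff_constantCoeff]
  have h : PowerSeries.constantCoeff (PowerSeries.constantCoeff (ladder a E)) = 4 := by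
    simpa [map_ofNat] using congr(PowerSeries.coeff 0 $(map_constantCoeff_ladder a E))
  rw [h]
  exact_mod_cast isUnit_natCast_of_ne_zero (R := R) four_ne_zero

variable {E} {a}

lemma coeffDeriv_ladder (ha : E a = 1) :
    2 * PowerSeries.X * coeffDeriv (derivInfty R) (ladder a E) = ladder a E *
      -(taylorShift (coeffDeriv E) (riccatiSol a - riccatiSol' a) -
        (riccatiSol a - riccatiSol' a) + 2 * PowerSeries.X * PowerSeries.C PowerSeries.X) := by
  rw [mul_neg]
  exact coeffDeriv_mixedLadder (isFrame_derivInfty ha) (isRiccati_riccatiSol a)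
    (isRiccati_riccatiSol' a) (isUnit_constantCoeff_riccatiSol a)
    (isUnit_constantCoeff_riccatiSol' a)

lemma ladder_mul_ladder' (ha : E a = 1) : ladder a E * ladder' a E =
    4 * PowerSeries.map PowerSeries.C (twoCAddX a) ^ 2 * PowerSeries.C PowerSeries.X ^ 2 := by
  have h := mixedLadder_mul_mixedLadder (isFrame_derivInfty ha) (isRiccati_riccatiSol a)
    (isRiccati_riccatiSol' a) (isUnit_constantCoeff_riccatiSol a)
    (isUnit_constantCoeff_riccatiSol' a)
  simpa [twoCAddX, map_ofNat, ladder, ladder'] using h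

-- Writing `N = ladder a E`, `N' = ladder' a E` and `κ = 2A + ħ`, the product formula for `N N'`
-- turns `8 κ² y² (2 / κ - E N / N)` into the antisymmetric expression `N E N' - N' E N`.
lemma ladder_mul_coeffDeriv_sub (ha : E a = 1) {k : R⟦X⟧} (hk : twoCAddX a * k = 1)
    {v : R⟦X⟧⟦X⟧} (hv : ladder a E * v = 1) :
    8 * PowerSeries.map PowerSeries.C (twoCAddX a) ^ 2 * PowerSeries.C PowerSeries.X ^ 2 *
      (2 * PowerSeries.map PowerSeries.C k - coeffDeriv (coeffDeriv E) (ladder a E) * v) =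
    ladder a E * coeffDeriv (coeffDeriv E) (ladder' a E) -
      ladder' a E * coeffDeriv (coeffDeriv E) (ladder a E) := by
  have hprod := ladder_mul_ladder' ha
  have hκ : coeffDeriv (coeffDeriv E) (PowerSeries.map PowerSeries.C (twoCAddX a)) = 2 := by
    simp [twoCAddX, two_mul, ha, one_add_one_eq_two]
  have hE := congr(coeffDeriv (coeffDeriv E) $hprod)
  have hk' := congr(PowerSeries.map PowerSeries.C $hk)
  have hfour : coeffDeriv (coeffDeriv E) (4 : R⟦X⟧⟦X⟧) = 0 := by
    exact_mod_cast (coeffDeriv (coeffDeriv E)).map_natCast 4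
  rw [map_mul, map_one] at hk'
  simp only [Derivation.leibniz, Derivation.leibniz_pow, hκ, hfour, coeffDeriv_C,
    coeffDeriv_X, map_zero, smul_eq_mul, nsmul_eq_mul, mul_zero, add_zero, zero_add, pow_one,
    Nat.add_one_sub_one] at hE
  push_cast at hE
  linear_combination 16 * PowerSeries.map PowerSeries.C (twoCAddX a) *
    PowerSeries.C PowerSeries.X ^ 2 * hk' + 2 * coeffDeriv (coeffDeriv E) (ladder a E) * v * hprod -
    2 * ladder' a E * coeffDeriv (coeffDeriv E) (ladder a E) * hv - hE

theorem exists_ladderDefect [IsDomain R] (ha : E a = 1) {k : R⟦X⟧} (hk : twoCAddX a * k = 1) :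
    ∃ Ψ : R⟦X⟧⟦X⟧, 2 * PowerSeries.X * coeffDeriv (derivInfty R) Ψ = coeffDeriv (coeffDeriv E)
        (taylorShift (coeffDeriv E) (riccatiSol a - riccatiSol' a) -
          (riccatiSol a - riccatiSol' a)) ∧
      IsConjSeries a (PowerSeries.C PowerSeries.X ^ 2 * Ψ)
        (-(PowerSeries.C PowerSeries.X ^ 2 * Ψ)) ∧
      PowerSeries.map PowerSeries.constantCoeff Ψ = 2 * k := by
  obtain ⟨v, hv⟩ := exists_ladder_mul_eq_one a E
  refine ⟨2 * PowerSeries.map PowerSeries.C k - coeffDeriv (coeffDeriv E) (ladder a E) * v,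
    ?_, ?_, ?_⟩
  · have hlog := mul_deriv_logDeriv (T := 2 * PowerSeries.X)
      (coeffDeriv_comm (isFrame_derivInfty ha).comm) hv (by simp [two_mul]) (coeffDeriv_ladder ha)
    have hk₀ : coeffDeriv (derivInfty R) (PowerSeries.map PowerSeries.C k) = 0 := by
      ext1 n
      simp
    rw [map_sub, two_mul (PowerSeries.map _ k), map_add, hk₀, mul_sub, hlog]
    simp [two_mul]
  · have hN := isConjSeries_ladder a E
    have hodd := (hN.mul (hN.symm.coeffDeriv E)).sub (hN.symm.mul (hN.coeffDeriv E))
    rw [← ladder_mul_coeffDeriv_sub ha hk hv, ← neg_sub (ladder a E * _),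
      ← ladder_mul_coeffDeriv_sub ha hk hv] at hodd
    obtain ⟨b, hb⟩ :=
      (isUnit_natCast_of_ne_zero (R := R⟦X⟧) (m := 8) (by norm_num)).exists_right_inv
    have hcancel (F : R⟦X⟧⟦X⟧) : PowerSeries.map PowerSeries.C (b * k ^ 2) *
        (8 * PowerSeries.map PowerSeries.C (twoCAddX a) ^ 2 * PowerSeries.C PowerSeries.X ^ 2 * F) =
          PowerSeries.C PowerSeries.X ^ 2 * F := by
      have h : PowerSeries.map PowerSeries.C (((8 : ℕ) : R⟦X⟧) * b * (twoCAddX a * k) ^ 2) =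
          (1 : R⟦X⟧⟦X⟧) := by
        rw [hb, hk, one_pow, one_mul, map_one]
      simp only [map_mul, map_pow, Nat.cast_ofNat, map_ofNat] at h ⊢
      linear_combination PowerSeries.C PowerSeries.X ^ 2 * F * h
    have hmul := (IsConjSeries.map_C (b * k ^ 2)).mul hodd
    rwa [mul_neg, hcancel] at hmul
  · rw [map_sub, map_mul, map_mul, map_coeffDeriv (constantCoeff_coeffDeriv E),
      map_constantCoeff_ladder]
    have hfour : coeffDeriv E (4 : R⟦X⟧) = 0 := by exact_mod_cast (coeffDeriv E).map_natCast 4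
    rw [hfour, zero_mul, sub_zero, map_ofNat]
    congr 1

end LadderDefect

section ShiftEquation

variable {R : Type*} [CommRing R] [Algebra ℚ R] {a : R} {E : Derivation ℚ R R}

lemma rho_pow_three_mul_coeffDeriv_coeffDeriv_rho (ha : E a = 1) :
    rho a ^ 3 * coeffDeriv E (coeffDeriv E (rho a)) = -(4 * PowerSeries.X ^ 3) := by
  have hρ : rho a * coeffDeriv E (rho a) =
      (PowerSeries.C a - 1) * PowerSeries.X ^ 2 - PowerSeries.X := by
    have h := congr(coeffDeriv E $(rho_sq a))
    simp only [sInfty, two_mul, sq, map_add, map_sub, Derivation.leibniz,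
      Derivation.map_one_eq_zero, coeffDeriv_C, coeffDeriv_X, ha, map_one, smul_eq_mul] at h
    have htwo : IsUnit (2 : R⟦X⟧) := by
      exact_mod_cast isUnit_natCast_of_ne_zero (R := R⟦X⟧) two_ne_zero
    refine htwo.mul_left_cancel ?_
    linear_combination h
  have hρ' := congr(coeffDeriv E $hρ)
  simp only [map_sub, Derivation.leibniz, Derivation.leibniz_pow, Derivation.map_one_eq_zero,
    coeffDeriv_C, coeffDeriv_X, ha, map_one, smul_eq_mul] at hρ'
  have hsq := rho_sq a
  rw [sInfty] at hsq
  linear_combination rho a ^ 2 * hρ' + PowerSeries.X ^ 2 * hsq -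
    (rho a * coeffDeriv E (rho a) +
      ((PowerSeries.C a - 1) * PowerSeries.X ^ 2 - PowerSeries.X)) * hρ

lemma coeffDeriv_coeffDeriv_rho (ha : E a = 1) :
    coeffDeriv E (coeffDeriv E (rho a)) = -(4 * atInfty a 3 1) := by
  rw [atInfty_apply, reflect_one, coe_pow, coe_X, ← mul_left_comm, ← mul_neg,
    ← rho_pow_three_mul_coeffDeriv_coeffDeriv_rho ha, ← mul_assoc, ← mul_pow, mul_comm (rhoInv a),
    rho_mul_rhoInv, one_pow, one_mul]

lemma derivInfty_atInfty_wPoly :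
    derivInfty R (atInfty a 1 (wPoly a)) = -(4 * (PowerSeries.C a * atInfty a 3 1)) := by
  have h : derivNum a 1 (wPoly a) = (-4 * a) • 1 := by
    rw [derivNum_apply, derivative_wPoly, wPoly, sPoly, smul_eq_C_mul]
    simp only [map_mul, map_sub, map_add, map_pow, map_one, map_neg, map_ofNat, Nat.cast_one]
    ring
  rw [derivInfty_atInfty (natDegree_wPoly_le a), h, map_smul, PowerSeries.smul_eq_C_mul, map_mul,
    map_neg, map_ofNat]
  ring

/-- The generating series of the expansions at infinity of `P m / s ^ (3 m / 2)`, for odd `m`. -/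
noncomputable def oddSeries (a : R) (P : ℕ → R[X]) : R⟦X⟧⟦X⟧ :=
  PowerSeries.mk fun m => if Odd m then atInfty a (3 * m) (P m) else 0

/-- The generating series of the coefficients of `X ^ (3 m)` in `P m`, for odd `m`. -/
noncomputable def oddLeadingSeries (P : ℕ → R[X]) : R⟦X⟧ :=
  PowerSeries.mk fun m => if Odd m then (P m).coeff (3 * m) else 0

variable {P : ℕ → R[X]}

lemma map_constantCoeff_oddSeries :
    PowerSeries.map PowerSeries.constantCoeff (oddSeries a P) = oddLeadingSeries P := by
  ext m
  rw [oddSeries, oddLeadingSeries, PowerSeries.coeff_map, PowerSeries.coeff_mk,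
    PowerSeries.coeff_mk]
  split_ifs
  · exact constantCoeff_atInfty ..
  · exact map_zero _

lemma isConjSeries_oddSeries [IsDomain R] :
    IsConjSeries a (oddSeries a P) (-oddSeries a P) := fun m => by
  rw [map_neg, oddSeries, PowerSeries.coeff_mk]
  split_ifs with hm
  · have hodd : Odd (3 * m) := Nat.odd_mul.mpr ⟨by decide, hm⟩
    simpa [hodd.neg_one_pow] using mk_atInfty_mem_conjPairs a (3 * m) (P m)
  · rw [neg_zero]
    exact zero_mem _

lemma derivInfty_oddSeries (hP : ∀ m, Odd m → derivNum a (3 * m) (P m) = qPoly a m) :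
    4 * (PowerSeries.X * coeffDeriv (derivInfty R) (oddSeries a P)) =
      riccatiSol a - riccatiSol' a - 2 * PowerSeries.C (rho a) := by
  ext1 n
  have hfour : (4 : R⟦X⟧⟦X⟧) = PowerSeries.C 4 := (map_ofNat _ _).symm
  have htwo : (2 : R⟦X⟧⟦X⟧) = PowerSeries.C 2 := (map_ofNat _ _).symm
  rw [map_sub, map_sub, coeff_riccatiSol', hfour, htwo, PowerSeries.coeff_C_mul, ← map_mul,
    PowerSeries.coeff_C]
  rcases n with _ | _ | m
  · simp only [PowerSeries.coeff_zero_eq_constantCoeff, constantCoeff_riccatiSol]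
    simp
    ring
  · simp [oddSeries]
  · rw [PowerSeries.coeff_succ_X_mul, coeff_coeffDeriv, oddSeries, PowerSeries.coeff_mk,
      coeff_add_two_riccatiSol, if_neg (Nat.succ_ne_zero _)]
    rcases (m + 1).even_or_odd with hm | hm
    · rw [if_neg (Nat.not_odd_iff_even.mpr hm), map_zero,
        (show Even (m + 1 + 1 + 1) from hm.add even_two).neg_one_pow]
      ring
    · rw [if_pos hm, derivInfty_atInfty (natDegree_le_of_derivNum_eq_qPoly hm (hP _ hm)), hP _ hm,
        ← qInfty, (show Odd (m + 1 + 1 + 1) from hm.add_even even_two).neg_one_pow]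
      ring

lemma exists_eq_map_C_of_coeffDeriv_derivInfty_eq_zero {F : R⟦X⟧⟦X⟧}
    (h : coeffDeriv (derivInfty R) F = 0) : ∃ G, F = PowerSeries.map PowerSeries.C G := by
  refine ⟨PowerSeries.map PowerSeries.constantCoeff F, ?_⟩
  ext n j
  rw [PowerSeries.coeff_map, PowerSeries.coeff_map, PowerSeries.coeff_C]
  split_ifs with hj
  · rw [hj, PowerSeries.coeff_zero_eq_constantCoeff]
  · have hn := congr(PowerSeries.coeff (j + 1) (PowerSeries.coeff n $h))
    rw [coeff_coeffDeriv, coeff_succ_derivInfty, map_zero, map_zero, neg_eq_zero] at hn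
    exact (isUnit_natCast_of_ne_zero hj).mul_right_eq_zero.mp hn

/-- The second derivative `E² (ħ * oddSeries a P)`, completed by the term `c * w / √s`. For
`c = 1 / (2 a)` that term is `E²` of half the primitive of `-√s / X`. -/
noncomputable def completedSeries (E : Derivation ℚ R R) (a c : R) (P : ℕ → R[X]) : R⟦X⟧⟦X⟧ :=
  PowerSeries.C (PowerSeries.C c * atInfty a 1 (wPoly a)) +
    PowerSeries.X * coeffDeriv (coeffDeriv E) (coeffDeriv (coeffDeriv E) (oddSeries a P))

variable {c : R}

lemma derivInfty_completedSeries (ha : E a = 1) (hc : 2 * a * c = 1)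
    (hP : ∀ m, Odd m → derivNum a (3 * m) (P m) = qPoly a m) :
    4 * coeffDeriv (derivInfty R) (completedSeries E a c P) =
      coeffDeriv (coeffDeriv E) (coeffDeriv (coeffDeriv E) (riccatiSol a - riccatiSol' a)) := by
  have hcomm := coeffDeriv_comm (derivInfty_coeffDeriv E)
  have hbase : derivInfty R (PowerSeries.C c * atInfty a 1 (wPoly a)) = -(2 * atInfty a 3 1) := by
    have h := congr(PowerSeries.C $hc)
    rw [map_mul, map_mul, map_ofNat, map_one] at h
    rw [Derivation.leibniz, derivInfty_C, derivInfty_atInfty_wPoly, smul_eq_mul, smul_zero]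
    linear_combination -2 * atInfty a 3 1 * h
  have hρ := congr(PowerSeries.C $(coeffDeriv_coeffDeriv_rho ha))
  have hodd := congr(coeffDeriv (coeffDeriv E) (coeffDeriv (coeffDeriv E)
    $(derivInfty_oddSeries hP)))
  have hnat (n : ℕ) (F : R⟦X⟧⟦X⟧) :
      coeffDeriv (coeffDeriv E) (n * F) = n * coeffDeriv (coeffDeriv E) F := by
    rw [← nsmul_eq_mul, map_nsmul, nsmul_eq_mul]
  have hfour := hnat 4
  have htwo := hnat 2
  push_cast at hfour htwo
  rw [hfour, hfour] at hodd
  generalize riccatiSol a - riccatiSol' a = O at hodd ⊢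
  rw [completedSeries, map_add, coeffDeriv_C, hbase]
  simp only [map_sub, htwo, coeffDeriv_X_mul, coeffDeriv_C, hcomm, map_neg, map_mul,
    map_ofNat] at hodd hρ ⊢
  linear_combination hodd - 2 * hρ

lemma isConjSeries_completedSeries [IsDomain R] :
    IsConjSeries a (completedSeries E a c P) (-completedSeries E a c P) := by
  have hodd := ((isConjSeries_oddSeries (a := a) (P := P)).coeffDeriv E).coeffDeriv E
  have hw := IsConjSeries.C (mk_atInfty_mem_conjPairs a 1 (wPoly a))
  have hc := IsConjSeries.C (mk_self_mem_conjPairs (a := a) (C_mem_rationalSeries c))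
  have h := (hc.mul hw).add ((isConjSeries_X a).mul hodd)
  rw [pow_one, neg_one_mul, map_neg, map_neg, map_neg, mul_neg, mul_neg, ← neg_add, ← map_mul] at h
  exact h

lemma map_constantCoeff_completedSeries :
    PowerSeries.map PowerSeries.constantCoeff (completedSeries E a c P) =
      PowerSeries.C c + PowerSeries.X * coeffDeriv E (coeffDeriv E (oddLeadingSeries P)) := by
  have hw : (wPoly a).coeff 1 = 1 := by simp [wPoly, coeff_X, coeff_one]
  rw [completedSeries, map_add, map_mul _ PowerSeries.X, PowerSeries.map_X, PowerSeries.map_C,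
    map_mul, PowerSeries.constantCoeff_C, constantCoeff_atInfty, hw, mul_one,
    map_coeffDeriv (constantCoeff_coeffDeriv E), map_coeffDeriv (constantCoeff_coeffDeriv E),
    map_constantCoeff_oddSeries]

lemma coeffDeriv_derivInfty_shiftDefect {φ Ψ O : R⟦X⟧⟦X⟧}
    (hφ : 4 * coeffDeriv (derivInfty R) φ =
      coeffDeriv (coeffDeriv E) (coeffDeriv (coeffDeriv E) O))
    (hΨ : 2 * PowerSeries.X * coeffDeriv (derivInfty R) Ψ =
      coeffDeriv (coeffDeriv E) (taylorShift (coeffDeriv E) O - O)) :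
    coeffDeriv (derivInfty R) (2 * (taylorShift (coeffDeriv E) φ - φ) -
      PowerSeries.X * coeffDeriv (coeffDeriv E) Ψ) = 0 := by
  have hcomm := coeffDeriv_comm (derivInfty_coeffDeriv E)
  have hshiftE (F : R⟦X⟧⟦X⟧) : coeffDeriv (coeffDeriv E) (taylorShift (coeffDeriv E) F) =
      taylorShift (coeffDeriv E) (coeffDeriv (coeffDeriv E) F) :=
    coeffDeriv_diffOp (fun _ => rfl) _ F
  have hshift : 4 * coeffDeriv (derivInfty R) (taylorShift (coeffDeriv E) φ) =
      taylorShift (coeffDeriv E) (4 * coeffDeriv (derivInfty R) φ) := by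
    rw [map_mul, map_ofNat, taylorShift_apply, taylorShift_apply,
      coeffDeriv_diffOp (derivInfty_coeffDeriv E)]
  have hΨE := congr(coeffDeriv (coeffDeriv E) $hΨ)
  have htwo : IsUnit (2 : R⟦X⟧⟦X⟧) := by
    exact_mod_cast isUnit_natCast_of_ne_zero (R := R⟦X⟧⟦X⟧) two_ne_zero
  refine htwo.mul_left_cancel ?_
  rw [hφ] at hshift
  simp only [two_mul, add_mul, map_sub, map_add, coeffDeriv_X_mul, hcomm, hshiftE]
    at hΨE hshift hφ ⊢
  linear_combination hshift - hφ - hΨE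

lemma isConjSeries_shiftDefect [IsDomain R] {φ Ψ : R⟦X⟧⟦X⟧} (hφ : IsConjSeries a φ (-φ))
    (hΨ : IsConjSeries a (PowerSeries.C PowerSeries.X ^ 2 * Ψ)
      (-(PowerSeries.C PowerSeries.X ^ 2 * Ψ))) :
    IsConjSeries a
      (PowerSeries.C PowerSeries.X ^ 2 * (2 * (taylorShift (coeffDeriv E) φ - φ) -
        PowerSeries.X * coeffDeriv (coeffDeriv E) Ψ))
      (-(PowerSeries.C PowerSeries.X ^ 2 * (2 * (taylorShift (coeffDeriv E) φ - φ) -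
        PowerSeries.X * coeffDeriv (coeffDeriv E) Ψ))) := by
  have hX : IsConjSeries a (PowerSeries.C PowerSeries.X ^ 2) (PowerSeries.C PowerSeries.X ^ 2) := by
    rw [← map_pow]
    exact .C (mk_self_mem_conjPairs (pow_mem X_mem_rationalSeries 2))
  have hshift := hX.mul ((hφ.taylorShift E).sub hφ)
  have hΨE := (isConjSeries_X a).mul (hΨ.coeffDeriv E)
  have hE : coeffDeriv (coeffDeriv E) (PowerSeries.C PowerSeries.X ^ 2 * Ψ) =
      PowerSeries.C PowerSeries.X ^ 2 * coeffDeriv (coeffDeriv E) Ψ := by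
    simp [Derivation.leibniz_pow]
  rw [map_neg, hE] at hΨE
  rw [map_neg] at hshift
  convert (hshift.add hshift).sub hΨE using 1 <;> ring

theorem taylorShift_sub_of_derivNum_eq_qPoly [IsDomain R] (ha : E a = 1) {k : R⟦X⟧}
    (hk : twoCAddX a * k = 1)
    (hP : ∀ m, Odd m → derivNum a (3 * m) (P m) = qPoly a m) {f : R⟦X⟧}
    (hf : f = PowerSeries.C (PowerSeries.constantCoeff k) +
      PowerSeries.X * coeffDeriv E (coeffDeriv E (oddLeadingSeries P))) :
    taylorShift E f - f = PowerSeries.X * coeffDeriv E k := by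
  have hk₀ : 2 * a * PowerSeries.constantCoeff k = 1 := by
    simpa [twoCAddX, map_ofNat] using congr(PowerSeries.constantCoeff $hk)
  have ha₀ : a ≠ 0 := by
    rintro rfl
    simp at hk₀
  obtain ⟨Ψ, hΨ, hΨodd, hΨ₀⟩ := exists_ladderDefect ha hk
  have hDφ := derivInfty_completedSeries ha hk₀ hP
  obtain ⟨F, hF⟩ := exists_eq_map_C_of_coeffDeriv_derivInfty_eq_zero
    (coeffDeriv_derivInfty_shiftDefect hDφ hΨ)
  have hF₀ : F = 0 := by
    refine eq_zero_of_map_C_mul_isConjSeries ha₀ ?_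
    rw [← hF]
    exact isConjSeries_shiftDefect isConjSeries_completedSeries hΨodd
  have hlim := congr(PowerSeries.map PowerSeries.constantCoeff $hF)
  simp only [hF₀, map_sub, map_mul, map_ofNat, PowerSeries.map_X, map_zero,
    map_taylorShift (constantCoeff_coeffDeriv E), map_coeffDeriv (constantCoeff_coeffDeriv E),
    hΨ₀, map_constantCoeff_completedSeries, ← hf, two_mul k, map_add] at hlim
  have htwo : IsUnit (2 : R⟦X⟧) := by
    exact_mod_cast isUnit_natCast_of_ne_zero (R := R⟦X⟧) two_ne_zero
  refine htwo.mul_left_cancel ?_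
  linear_combination hlim

end ShiftEquation

section Bernoulli

/-- The exponential generating series of the values `B_n(1/2)` of the Bernoulli polynomials. -/
noncomputable def halfBernoulliSeries : ℚ⟦X⟧ :=
  2 * PowerSeries.rescale (1 / 2) (bernoulliPowerSeries ℚ) - bernoulliPowerSeries ℚ

lemma coeff_halfBernoulliSeries (n : ℕ) :
    PowerSeries.coeff n halfBernoulliSeries =
      (2 * (1 / 2) ^ n - 1) * _root_.bernoulli n / n.factorial := by
  rw [halfBernoulliSeries, map_sub, two_mul, map_add, PowerSeries.coeff_rescale,
    bernoulliPowerSeries, PowerSeries.coeff_mk]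
  simp only [eq_ratCast, Rat.cast_id]
  ring

lemma halfBernoulliSeries_mul_exp_sub_one :
    halfBernoulliSeries * (PowerSeries.exp ℚ - 1) =
      PowerSeries.X * PowerSeries.rescale (1 / 2) (PowerSeries.exp ℚ) := by
  have hfull : bernoulliPowerSeries ℚ * (PowerSeries.exp ℚ - 1) = PowerSeries.X :=
    bernoulliPowerSeries_mul_exp_sub_one ℚ
  have hhalf := congr(PowerSeries.rescale (1 / 2 : ℚ) $hfull)
  rw [map_mul, map_sub, map_one, PowerSeries.rescale_X] at hhalf
  have hsq : PowerSeries.rescale (1 / 2 : ℚ) (PowerSeries.exp ℚ) ^ 2 = PowerSeries.exp ℚ := by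
    rw [← map_pow, PowerSeries.exp_pow_eq_rescale_exp, PowerSeries.rescale_rescale]
    norm_num
  have hC : (2 : ℚ⟦X⟧) * PowerSeries.C (1 / 2) = 1 := by
    rw [← map_ofNat PowerSeries.C 2, ← map_mul]
    norm_num
  rw [halfBernoulliSeries]
  generalize PowerSeries.rescale (1 / 2 : ℚ) (PowerSeries.exp ℚ) = e at hhalf hsq ⊢
  rw [← hsq] at hfull ⊢
  linear_combination 2 * (e + 1) * hhalf - hfull + (e + 1) * PowerSeries.X * hC

lemma bernoulli_two_mul_ne_zero {k : ℕ} (hk : k ≠ 0) : _root_.bernoulli (2 * k) ≠ 0 := by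
  intro hB
  have hsum := hasSum_zeta_nat hk
  rw [hB] at hsum
  have hle := le_hasSum hsum 1 fun _ _ => by positivity
  norm_num at hle

end Bernoulli

section LeadingCoefficient

variable {R : Type*} [CommRing R] [Algebra ℚ R] {a c : R} {E : Derivation ℚ R R}

lemma twoCAddX_mul_diffOp (ha : E a = 1) (hc : 2 * a * c = 1) :
    twoCAddX a *
      diffOp E (PowerSeries.rescale (1 / 2) (PowerSeries.exp ℚ)) (PowerSeries.C c) = 1 := by
  have h2a : ((1 / 2 : ℚ) • E) (2 * a) = algebraMap ℚ R 1 := by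
    rw [two_mul, map_add, Derivation.smul_apply, ha, ← add_smul, Algebra.smul_def]
    norm_num
  rw [diffOp_rescale, ← taylorShift_apply, twoCAddX, ← map_ofNat PowerSeries.C, ← map_mul,
    ← one_smul ℚ PowerSeries.X, ← taylorShift_C_of_deriv_eq_algebraMap h2a, ← map_mul,
    ← map_mul, hc, map_one, map_one]

-- Formally, `(exp (ħE) - 1)⁻¹ ħE` is the Bernoulli series evaluated at `ħE`.
lemma coeffDeriv_eq_diffOp_halfBernoulliSeries {f F : R⟦X⟧}
    (hf : taylorShift E f - f = PowerSeries.X * coeffDeriv E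
      (diffOp E (PowerSeries.rescale (1 / 2) (PowerSeries.exp ℚ)) F)) :
    coeffDeriv E f = coeffDeriv E (diffOp E halfBernoulliSeries F) := by
  have hB : bernoulliPowerSeries ℚ * (PowerSeries.exp ℚ - 1) = PowerSeries.X :=
    bernoulliPowerSeries_mul_exp_sub_one ℚ
  refine PowerSeries.X_mul_cancel ?_
  calc PowerSeries.X * coeffDeriv E f
      = diffOp E (bernoulliPowerSeries ℚ) (taylorShift E f - f) := by
        rw [← diffOp_X, ← hB, diffOp_mul, diffOp_sub, diffOp_one, taylorShift_apply]
    _ = diffOp E (bernoulliPowerSeries ℚ *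
          (halfBernoulliSeries * (PowerSeries.exp ℚ - 1))) F := by
        rw [hf, halfBernoulliSeries_mul_exp_sub_one, diffOp_mul, diffOp_mul, diffOp_X]
    _ = PowerSeries.X * coeffDeriv E (diffOp E halfBernoulliSeries F) := by
        rw [mul_left_comm, hB, mul_comm, diffOp_mul, diffOp_X]

lemma pow_three_apply_coeff_of_derivNum_eq_qPoly [IsDomain R] (ha : E a = 1) (hc : 2 * a * c = 1)
    {P : ℕ → R[X]}
    (hP : ∀ m, Odd m → derivNum a (3 * m) (P m) = qPoly a m) {m : ℕ} (hm : Odd m) :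
    ((E : R →ₗ[ℚ] R) ^ 3) ((P m).coeff (3 * m)) =
      PowerSeries.coeff (m + 1) halfBernoulliSeries • ((E : R →ₗ[ℚ] R) ^ (m + 2)) c := by
  have hshift := taylorShift_sub_of_derivNum_eq_qPoly ha (twoCAddX_mul_diffOp ha hc) hP rfl
  have h := congr(PowerSeries.coeff (m + 1) $(coeffDeriv_eq_diffOp_halfBernoulliSeries hshift))
  rw [map_add, coeffDeriv_C, coeffDeriv_X_mul, map_add, PowerSeries.coeff_C,
    if_neg m.succ_ne_zero, zero_add, PowerSeries.coeff_succ_X_mul, coeff_coeffDeriv,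
    coeff_coeffDeriv, coeff_coeffDeriv, coeff_coeffDeriv, coeff_diffOp_C, Derivation.map_smul,
    oddLeadingSeries, PowerSeries.coeff_mk, if_pos hm] at h
  rw [pow_succ' _ (m + 1)]
  exact h

end LeadingCoefficient

section Homogeneity

variable {R : Type*} [CommRing R] {a b : R}

lemma sPoly_comp_C_mul_X (hab : a * b = 1) :
    (sPoly b).comp (C b * X) = C (b ^ 2) * sPoly a := by
  have h := congr(C $hab)
  simp only [sPoly, sub_comp, add_comp, mul_comp, pow_comp, X_comp, C_comp]
  simp only [map_mul, map_add, map_sub, map_pow, map_one, map_ofNat] at h ⊢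
  linear_combination (2 * C b * X - C a * C b + 2 * C b - 1) * h

lemma wPoly_comp_C_mul_X (hab : a * b = 1) : (wPoly b).comp (C b * X) = C b * wPoly a := by
  have h := congr(C $hab)
  simp only [wPoly, sub_comp, X_comp, C_comp]
  simp only [map_mul, map_add, map_one] at h ⊢
  linear_combination h

lemma derivNum_comp_C_mul_X (hab : a * b = 1) (n : ℕ) (P : R[X]) :
    (derivNum b n P).comp (C b * X) = C b * derivNum a n (P.comp (C b * X)) := by
  simp only [derivNum_apply, sub_comp, mul_comp, natCast_comp, sPoly_comp_C_mul_X hab,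
    wPoly_comp_C_mul_X hab, derivative_comp, derivative_mul, derivative_C, derivative_X, map_pow]
  ring

lemma qPoly_comp_C_mul_X [Algebra ℚ R] (hab : a * b = 1) (m : ℕ) :
    (qPoly b m).comp (C b * X) = C (b ^ (2 * m + 1)) * qPoly a m := by
  induction m using Nat.strong_induction_on with | _ m ih
  rcases m with _ | _ | m
  · simp
  · have hfour : IsUnit (4 : R[X]) := by
      exact_mod_cast isUnit_natCast_of_ne_zero (R := R[X]) four_ne_zero
    have hb := congr(($(four_mul_qPoly_one b)).comp (C b * X))
    have h := congr(C $hab)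
    have ha := four_mul_qPoly_one a
    simp only [mul_comp, neg_comp, add_comp, sub_comp, pow_comp, X_comp, C_comp, ofNat_comp] at hb
    simp only [map_mul, map_add, map_sub, map_pow, map_one, map_ofNat] at ha hb h ⊢
    refine hfour.mul_left_cancel ?_
    push_cast at hb
    linear_combination hb - C b ^ 3 * ha + (X * (10 * C b ^ 2 - 3 * C b * (C a * C b + 1)) +
      2 * ((C a * C b) ^ 2 + C a * C b + 1 - C b * (C a * C b + 1) - C b ^ 2)) * h
  · have hsum : ((∑ ij ∈ antidiagonal (m + 1), qPoly b ij.1 * qPoly b ij.2).comp (C b * X)) =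
        C (b ^ (2 * (m + 1) + 2)) * ∑ ij ∈ antidiagonal (m + 1), qPoly a ij.1 * qPoly a ij.2 := by
      rw [Polynomial.sum_comp, Finset.mul_sum]
      refine Finset.sum_congr rfl fun ij hij => ?_
      rw [mem_antidiagonal] at hij
      rw [mul_comp, ih _ (by omega), ih _ (by omega), ← hij]
      simp only [map_pow]
      ring
    rw [qPoly_succ b m.succ_pos, qPoly_succ a m.succ_pos]
    simp only [sub_comp, neg_comp, mul_comp, X_comp, hsum, derivNum_comp_C_mul_X hab,
      sPoly_comp_C_mul_X hab, ih (m + 1) (by omega)]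
    rw [derivNum_C_mul]
    simp only [map_pow]
    ring

lemma coeff_eq_mul_coeff_of_derivNum_eq_qPoly [Algebra ℚ R] (hab : a * b = 1) {m : ℕ} (hm : Odd m)
    {P P' : R[X]} (hP : derivNum a (3 * m) P = qPoly a m)
    (hP' : derivNum b (3 * m) P' = qPoly b m) :
    P.coeff (3 * m) = b ^ m * P'.coeff (3 * m) := by
  have hP'' : derivNum a (3 * m) (C (a ^ (2 * m)) * P'.comp (C b * X)) = qPoly a m := by
    rw [derivNum_C_mul]
    have h := congr(C (a ^ (2 * m + 1)) * ($hP').comp (C b * X))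
    rw [derivNum_comp_C_mul_X hab, qPoly_comp_C_mul_X hab, ← mul_assoc, ← mul_assoc, ← map_mul,
      ← map_mul, ← mul_pow, hab, one_pow, map_one, one_mul, pow_succ, mul_assoc, hab, mul_one] at h
    exact h
  have hpow : a ^ (2 * m) * b ^ (3 * m) = b ^ m := by
    rw [show 3 * m = 2 * m + m by ring, pow_add, ← mul_assoc, ← mul_pow, hab, one_pow, one_mul]
  rw [(existsUnique_derivNum_eq_qPoly (.of_mul_eq_one b hab) hm).unique hP hP'', coeff_C_mul,
    comp_C_mul_X_coeff, ← hpow]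
  ring

end Homogeneity

section Laurent

open LaurentPolynomial (T)
open scoped LaurentPolynomial

/-- The derivation `d/dT` of `ℚ[T;T⁻¹]`. -/
noncomputable def laurentDeriv : Derivation ℚ ℚ[T;T⁻¹] ℚ[T;T⁻¹] :=
  Derivation.mk' ((AddMonoidAlgebra.basis ℤ ℚ).constr ℚ
    fun n => (n : ℚ) • (T (n - 1) : ℚ[T;T⁻¹])) (by
    intro F G
    set D := (AddMonoidAlgebra.basis ℤ ℚ).constr ℚ fun n => (n : ℚ) • (T (n - 1) : ℚ[T;T⁻¹])
    have hT (n : ℤ) : D (T n) = (n : ℚ) • T (n - 1) :=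
      (AddMonoidAlgebra.basis ℤ ℚ).constr_basis ℚ _ n
    induction F using LaurentPolynomial.induction_on' with
    | add F₁ F₂ h₁ h₂ => rw [add_mul, map_add, h₁, h₂, map_add, add_smul, smul_add]; abel
    | C_mul_T m r =>
      induction G using LaurentPolynomial.induction_on' with
      | add G₁ G₂ h₁ h₂ => rw [mul_add, map_add, h₁, h₂, map_add, add_smul, smul_add]; abel
      | C_mul_T n t =>
        simp only [← LaurentPolynomial.smul_eq_C_mul, smul_mul_smul_comm, ← LaurentPolynomial.T_add,
          map_smul, hT, smul_eq_mul, smul_smul, add_sub_assoc]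
        rw [add_comm n (m - 1), ← add_sub_right_comm, add_sub_assoc, ← add_smul]
        push_cast
        ring_nf)

lemma laurentDeriv_T (n : ℤ) : laurentDeriv (T n) = (n : ℚ) • T (n - 1) :=
  (AddMonoidAlgebra.basis ℤ ℚ).constr_basis ℚ _ n

lemma laurentDeriv_T_one : laurentDeriv (T 1) = 1 := by
  rw [laurentDeriv_T, Int.cast_one, one_smul, sub_self, LaurentPolynomial.T_zero]

lemma coeff_laurentDeriv (F : ℚ[T;T⁻¹]) (j : ℤ) :
    (laurentDeriv F).coeff j = (j + 1) * F.coeff (j + 1) := by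
  induction F using LaurentPolynomial.induction_on' with
  | add F G hF hG => simp [hF, hG, mul_add]
  | C_mul_T n r =>
    simp only [← LaurentPolynomial.smul_eq_C_mul, Derivation.map_smul, laurentDeriv_T,
      AddMonoidAlgebra.coeff_smul, Finsupp.smul_apply, LaurentPolynomial.T_apply, sub_eq_iff_eq_add,
      smul_eq_mul]
    split_ifs with h
    · rw [h]
      push_cast
      ring
    · simp

lemma laurentDeriv_pow_T_neg_one (n : ℕ) :
    ((laurentDeriv : ℚ[T;T⁻¹] →ₗ[ℚ] ℚ[T;T⁻¹]) ^ n) (T (-1)) =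
      ((-1) ^ n * n.factorial : ℚ) • T (-1 - n) := by
  induction n with
  | zero => simp
  | succ n ih =>
    rw [pow_succ', Module.End.mul_apply, ih, map_smul, Derivation.coeFn_coe, laurentDeriv_T,
      smul_smul, Nat.factorial_succ, sub_sub]
    push_cast
    congr 1
    ring

lemma coeff_laurentDeriv_pow_three (F : ℚ[T;T⁻¹]) (i : ℤ) :
    (((laurentDeriv : ℚ[T;T⁻¹] →ₗ[ℚ] ℚ[T;T⁻¹]) ^ 3) F).coeff (i - 3) =
      i * (i - 1) * (i - 2) * F.coeff i := by
  rw [pow_succ', pow_two, Module.End.mul_apply, Module.End.mul_apply, Derivation.coeFn_coe,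
    coeff_laurentDeriv, coeff_laurentDeriv, coeff_laurentDeriv,
    show i - 3 + 1 + 1 + 1 = i by ring]
  push_cast
  ring

lemma coeff_eq_of_laurentDeriv_pow_three_eq {F G : ℚ[T;T⁻¹]}
    (h : ((laurentDeriv : ℚ[T;T⁻¹] →ₗ[ℚ] ℚ[T;T⁻¹]) ^ 3) F =
      ((laurentDeriv : ℚ[T;T⁻¹] →ₗ[ℚ] ℚ[T;T⁻¹]) ^ 3) G)
    {i : ℤ} (h₀ : i ≠ 0) (h₁ : i ≠ 1) (h₂ : i ≠ 2) : F.coeff i = G.coeff i := by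
  have hi := congr(($h).coeff (i - 3))
  rw [coeff_laurentDeriv_pow_three, coeff_laurentDeriv_pow_three] at hi
  have hprod : (i : ℚ) * (i - 1) * (i - 2) ≠ 0 :=
    mul_ne_zero (mul_ne_zero (mod_cast h₀) (sub_ne_zero.mpr (mod_cast h₁)))
      (sub_ne_zero.mpr (mod_cast h₂))
  exact mul_left_cancel₀ hprod hi

-- `laurentDeriv ^ 3` kills the powers `T ^ i` with `i ∈ {0, 1, 2}` only, and the symmetry `hF`
-- exchanges these exponents with negative ones.
lemma eq_smul_one_add_T_of_laurentDeriv_pow_three_eq {F : ℚ[T;T⁻¹]} {m : ℕ} (hm : m ≠ 0) {r : ℚ}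
    (h : ((laurentDeriv : ℚ[T;T⁻¹] →ₗ[ℚ] ℚ[T;T⁻¹]) ^ 3) F =
      ((laurentDeriv : ℚ[T;T⁻¹] →ₗ[ℚ] ℚ[T;T⁻¹]) ^ 3) (r • T (-m)))
    (hF : F = T (-m) * LaurentPolynomial.invert F) : F = r • (1 + T (-m)) := by
  have hsymm (i : ℤ) : F.coeff i = F.coeff (-m - i) := by
    have hi := congr(($hF).coeff i)
    rwa [T, AddMonoidAlgebra.coeff_single_mul_apply, one_mul, LaurentPolynomial.invert_apply,
      neg_neg, neg_add'] at hi
  have hcoeff {i : ℤ} (h₀ : i ≠ 0) (h₁ : i ≠ 1) (h₂ : i ≠ 2) :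
      F.coeff i = r * if -m = i then 1 else 0 := by
    rw [coeff_eq_of_laurentDeriv_pow_three_eq h h₀ h₁ h₂, AddMonoidAlgebra.coeff_smul,
      Finsupp.smul_apply, LaurentPolynomial.T_apply, smul_eq_mul]
  ext i
  rw [smul_add, ← LaurentPolynomial.T_zero, AddMonoidAlgebra.coeff_add, Finsupp.add_apply,
    AddMonoidAlgebra.coeff_smul, AddMonoidAlgebra.coeff_smul, Finsupp.smul_apply,
    Finsupp.smul_apply, LaurentPolynomial.T_apply, LaurentPolynomial.T_apply]
  by_cases hi : i = 0 ∨ i = 1 ∨ i = 2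
  · rw [hsymm, hcoeff (by omega) (by omega) (by omega), if_neg (by omega : ¬(-(m : ℤ) = i))]
    simp only [show -(m : ℤ) = -m - i ↔ 0 = i by omega, smul_eq_mul, mul_ite, mul_one, mul_zero,
      add_zero]
  · rw [hcoeff (by tauto) (by tauto) (by tauto), if_neg (by omega : ¬(0 = i))]
    simp

lemma coeff_halfBernoulliSeries_smul_laurentDeriv_pow {m : ℕ} (hm : Odd m) :
    PowerSeries.coeff (m + 1) halfBernoulliSeries •
        ((laurentDeriv : ℚ[T;T⁻¹] →ₗ[ℚ] ℚ[T;T⁻¹]) ^ (m + 2)) ((1 / 2 : ℚ) • T (-1)) =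
      ((laurentDeriv : ℚ[T;T⁻¹] →ₗ[ℚ] ℚ[T;T⁻¹]) ^ 3)
        ((((1 / 2) ^ m - 1) * _root_.bernoulli (m + 1) / (2 * m * (m + 1)) : ℚ) • T (-m)) := by
  obtain ⟨n, rfl⟩ := hm
  have hneg := laurentDeriv_pow_T_neg_one (2 * n)
  rw [(even_two_mul n).neg_one_pow, one_mul] at hneg
  have hexp : (-1 - (2 * n : ℕ) : ℤ) = -((2 * n + 1 : ℕ) : ℤ) := by
    push_cast
    ring
  rw [show 2 * n + 1 + 2 = 3 + 2 * n by ring, pow_add, Module.End.mul_apply, map_smul, hneg, hexp,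
    ← map_smul, smul_smul, smul_smul, coeff_halfBernoulliSeries, Nat.factorial_succ,
    Nat.factorial_succ]
  congr 2
  push_cast
  field_simp
  ring

lemma invert_coeff_eq_of_derivNum_eq_qPoly {m : ℕ} (hm : Odd m) {P : ℚ[T;T⁻¹][X]}
    (hP : derivNum (T 1) (3 * m) P = qPoly (T 1) m) :
    P.coeff (3 * m) = T (-m) * LaurentPolynomial.invert (P.coeff (3 * m)) := by
  have hT : (T 1 * T (-1) : ℚ[T;T⁻¹]) = 1 := by
    rw [← LaurentPolynomial.T_add, add_neg_cancel, LaurentPolynomial.T_zero]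
  have hinv : LaurentPolynomial.invert (T 1 : ℚ[T;T⁻¹]) = T (-1) := LaurentPolynomial.invert_T 1
  have hP' := congr(($hP).map ((LaurentPolynomial.invert : ℚ[T;T⁻¹] ≃ₐ[ℚ] ℚ[T;T⁻¹]).toAlgHom :
    ℚ[T;T⁻¹] →+* ℚ[T;T⁻¹]))
  rw [map_derivNum, map_qPoly] at hP'
  have h := coeff_eq_mul_coeff_of_derivNum_eq_qPoly hT hm hP (hinv ▸ hP')
  rwa [coeff_map, LaurentPolynomial.T_pow, mul_neg_one] at h

theorem coeff_eq_of_derivNum_eq_qPoly {m : ℕ} (hm : Odd m) {P : ℚ[T;T⁻¹][X]}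
    (hP : derivNum (T 1) (3 * m) P = qPoly (T 1) m) :
    P.coeff (3 * m) =
      (((1 / 2) ^ m - 1) * _root_.bernoulli (m + 1) / (2 * m * (m + 1)) : ℚ) • (1 + T (-m)) := by
  have hc : 2 * T 1 * ((1 / 2 : ℚ) • T (-1)) = (1 : ℚ[T;T⁻¹]) := by
    rw [mul_assoc, mul_smul_comm, ← LaurentPolynomial.T_add, add_neg_cancel,
      LaurentPolynomial.T_zero, Algebra.smul_def, mul_one, ← map_ofNat (algebraMap ℚ _), ← map_mul]
    norm_num
  have hsol (m : ℕ) (hm : Odd m) := existsUnique_derivNum_eq_qPoly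
    (LaurentPolynomial.isUnit_T 1 : IsUnit (T 1 : ℚ[T;T⁻¹])) hm
  choose! S hS using fun m hm => (hsol m hm).exists
  have hcoeff := pow_three_apply_coeff_of_derivNum_eq_qPoly laurentDeriv_T_one hc hS hm
  refine eq_smul_one_add_T_of_laurentDeriv_pow_three_eq hm.pos.ne' ?_
    (invert_coeff_eq_of_derivNum_eq_qPoly hm hP)
  rw [(hsol m hm).unique hP (hS m hm), hcoeff, coeff_halfBernoulliSeries_smul_laurentDeriv_pow hm]

end Laurent

section Even

lemma natDegree_coeff_le_of_mul_eq {R : Type*} [CommRing R] {c : ℕ} {F G H : R[X]⟦X⟧}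
    (hF : ∀ n, (PowerSeries.coeff n F).natDegree ≤ c * n)
    (hG : ∀ n, (PowerSeries.coeff n G).natDegree ≤ c * n)
    (hF₀ : PowerSeries.constantCoeff F = 1) (h : F * H = G) (n : ℕ) :
    (PowerSeries.coeff n H).natDegree ≤ c * n := by
  induction n using Nat.strong_induction_on with | _ n ih
  have hn : PowerSeries.coeff n H + ∑ ij ∈ (antidiagonal n).erase (0, n),
      PowerSeries.coeff ij.1 F * PowerSeries.coeff ij.2 H = PowerSeries.coeff n G := by
    rw [← h, PowerSeries.coeff_mul, ← Finset.add_sum_erase _ _ (a := (0, n)) (mem_antidiagonal.mpr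
      (zero_add n)), PowerSeries.coeff_zero_eq_constantCoeff_apply, hF₀, one_mul]
  rw [eq_sub_of_add_eq hn]
  refine (natDegree_sub_le _ _).trans (max_le (hG n) (natDegree_sum_le_of_forall_le _ _ ?_))
  rintro ⟨i, j⟩ hij
  rw [Finset.mem_erase, mem_antidiagonal, Ne, Prod.mk.injEq] at hij
  obtain ⟨hne, rfl⟩ := hij
  rw [mul_add]
  exact natDegree_mul_le_of_le (hF i) (ih j (by omega))

variable {R : Type*} [CommRing R] [Algebra ℚ R]

/-- The Euler derivation `τ d/dτ` of `M⟦τ⟧`. -/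
noncomputable def eulerDeriv (M : Type*) [CommRing M] [Algebra ℚ M] : Derivation ℚ M⟦X⟧ M⟦X⟧ :=
  (PowerSeries.X : M⟦X⟧) • (d⁄dX M).restrictScalars ℚ

lemma coeff_eulerDeriv (F : R⟦X⟧) (n : ℕ) :
    PowerSeries.coeff n (eulerDeriv R F) = n * PowerSeries.coeff n F := by
  rcases n with _ | n
  · simp [eulerDeriv]
  · simp [eulerDeriv, PowerSeries.coeff_derivative, mul_comm]

/-- The derivation of `R[X]⟦τ⟧` acting on the coefficient of `τ ^ n` as `derivNum a (3 * n)`. -/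
noncomputable def seriesDeriv (a : R) : Derivation ℚ R[X]⟦X⟧ R[X]⟦X⟧ :=
  (PowerSeries.C (sPoly a) : R[X]⟦X⟧) • coeffDeriv (derivative'.restrictScalars ℚ) -
    (PowerSeries.C (3 * wPoly a) : R[X]⟦X⟧) • eulerDeriv R[X]

lemma coeff_seriesDeriv (a : R) (F : R[X]⟦X⟧) (n : ℕ) :
    PowerSeries.coeff n (seriesDeriv a F) = derivNum a (3 * n) (PowerSeries.coeff n F) := by
  simp only [seriesDeriv, Derivation.sub_apply, Derivation.smul_apply, smul_eq_mul, map_sub,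
    PowerSeries.coeff_C_mul, coeff_coeffDeriv, coeff_eulerDeriv, derivNum_apply]
  push_cast
  rw [Derivation.restrictScalars_apply, derivative'_apply]
  ring

lemma seriesDeriv_eulerDeriv (a : R) (F : R[X]⟦X⟧) :
    seriesDeriv a (eulerDeriv R[X] F) = eulerDeriv R[X] (seriesDeriv a F) := by
  ext1 n
  rw [coeff_seriesDeriv, coeff_eulerDeriv, coeff_eulerDeriv, coeff_seriesDeriv, ← nsmul_eq_mul,
    map_nsmul, nsmul_eq_mul]

lemma seriesDeriv_evalNegHom (a : R) (F : R[X]⟦X⟧) :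
    seriesDeriv a (PowerSeries.evalNegHom F) = PowerSeries.evalNegHom (seriesDeriv a F) := by
  ext1 n
  rw [coeff_seriesDeriv]
  rcases Nat.even_or_odd n with hn | hn <;>
    simp [hn.neg_one_pow, coeff_seriesDeriv]

variable (a : R)

/-- The generating series `∑ Q_m τ ^ m`. -/
noncomputable def qPolySeries : R[X]⟦X⟧ := PowerSeries.mk (qPoly a)

lemma coeff_qPolySeries (n : ℕ) : PowerSeries.coeff n (qPolySeries a) = qPoly a n :=
  PowerSeries.coeff_mk _ _

lemma seriesDeriv_C_X_mul_X_mul_qPolySeries :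
    seriesDeriv a (PowerSeries.C X * (PowerSeries.X * qPolySeries a)) =
      PowerSeries.C (qPoly a 1) * PowerSeries.X - qPolySeries a -
        PowerSeries.C X * (PowerSeries.X * qPolySeries a ^ 2) := by
  ext1 n
  rw [coeff_seriesDeriv, map_sub, map_sub]
  rcases n with _ | _ | m
  · simp [qPolySeries]
  · simp [qPolySeries, sq, PowerSeries.coeff_succ_X_mul]
  · have hX : PowerSeries.coeff (m + 2) (PowerSeries.X : R[X]⟦X⟧) = 0 := by
      rw [PowerSeries.coeff_X, if_neg (by omega)]
    have hsq : PowerSeries.coeff (m + 1) (qPolySeries a ^ 2) =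
        ∑ ij ∈ antidiagonal (m + 1), qPoly a ij.1 * qPoly a ij.2 := by
      simp only [sq, PowerSeries.coeff_mul, coeff_qPolySeries]
    rw [PowerSeries.coeff_C_mul, PowerSeries.coeff_C_mul, PowerSeries.coeff_C_mul,
      PowerSeries.coeff_succ_X_mul, PowerSeries.coeff_succ_X_mul, hX, hsq, coeff_qPolySeries,
      coeff_qPolySeries, qPoly_succ a m.succ_pos, derivNum_apply, derivNum_apply, derivative_mul,
      derivative_X]
    ring

/-- The series `1 + 2 X ∑ Q_m τ ^ (m + 1)`, summed over odd `m`. -/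
noncomputable def oddQPolySeries : R[X]⟦X⟧ :=
  1 + PowerSeries.C X * (PowerSeries.X * (qPolySeries a - PowerSeries.evalNegHom (qPolySeries a)))

lemma seriesDeriv_oddQPolySeries : seriesDeriv a (oddQPolySeries a) =
    -(oddQPolySeries a * (qPolySeries a + PowerSeries.evalNegHom (qPolySeries a))) := by
  have h := seriesDeriv_C_X_mul_X_mul_qPolySeries a
  have hneg := congr(PowerSeries.evalNegHom $h)
  rw [← seriesDeriv_evalNegHom] at hneg
  simp only [map_mul, map_sub, map_pow, evalNegHom_C, PowerSeries.evalNegHom_X, mul_neg, neg_mul,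
    map_neg] at hneg
  rw [oddQPolySeries, mul_sub, mul_sub, map_add, map_sub, Derivation.map_one_eq_zero]
  linear_combination h + hneg

lemma constantCoeff_oddQPolySeries : PowerSeries.constantCoeff (oddQPolySeries a) = 1 := by
  simp [oddQPolySeries]

lemma natDegree_coeff_oddQPolySeries_le (n : ℕ) :
    (PowerSeries.coeff n (oddQPolySeries a)).natDegree ≤ 2 * n := by
  rcases n with _ | n
  · simp [oddQPolySeries]
  · have hQ := natDegree_qPoly_le a n
    rw [oddQPolySeries, map_add, PowerSeries.coeff_C_mul, PowerSeries.coeff_succ_X_mul,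
      PowerSeries.coeff_one, if_neg n.succ_ne_zero, zero_add, map_sub]
    refine natDegree_mul_le_of_le natDegree_X_le (natDegree_sub_le_of_le
      (m := 2 * n + 1) (n := 2 * n + 1) ?_ ?_) |>.trans (by simp; omega)
    · rwa [coeff_qPolySeries]
    · rw [coeff_evalNegHom, coeff_qPolySeries]
      rcases n.even_or_odd with hn | hn <;> simpa [hn.neg_one_pow]

lemma exists_seriesDeriv_eq : ∃ H : R[X]⟦X⟧,
    (∀ n, (PowerSeries.coeff n H).natDegree ≤ 2 * n) ∧ seriesDeriv a H =
      -eulerDeriv R[X] (qPolySeries a + PowerSeries.evalNegHom (qPolySeries a)) := by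
  have hF := natDegree_coeff_oddQPolySeries_le a
  obtain ⟨I, hI⟩ := (PowerSeries.isUnit_iff_constantCoeff.mpr
    ((constantCoeff_oddQPolySeries a).symm ▸ isUnit_one)).exists_right_inv
  refine ⟨eulerDeriv R[X] (oddQPolySeries a) * I, natDegree_coeff_le_of_mul_eq hF (fun n => ?_)
    (constantCoeff_oddQPolySeries a) (mul_left_comm _ _ _ |>.trans (by rw [hI, mul_one])), ?_⟩
  · rw [coeff_eulerDeriv, ← nsmul_eq_mul]
    exact (natDegree_smul_le _ _).trans (hF n)
  · have h := mul_deriv_logDeriv (D := seriesDeriv a) (E := eulerDeriv R[X]) (T := 1)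
      (seriesDeriv_eulerDeriv a) hI (Derivation.map_one_eq_zero _)
      ((one_mul _).trans ((seriesDeriv_oddQPolySeries a).trans (neg_mul_eq_mul_neg _ _)))
    rwa [one_mul, map_neg] at h

theorem exists_derivNum_eq_qPoly_two_mul {k : ℕ} (hk : k ≠ 0) :
    ∃ P : R[X], P.natDegree ≤ 4 * k ∧ derivNum a (6 * k) P = qPoly a (2 * k) := by
  obtain ⟨H, hdeg, hH⟩ := exists_seriesDeriv_eq a
  have hcoeff := congr(PowerSeries.coeff (2 * k) $hH)
  rw [coeff_seriesDeriv, map_neg, coeff_eulerDeriv, map_add, coeff_evalNegHom, coeff_qPolySeries,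
    (even_two_mul k).neg_one_pow, one_mul, ← two_mul, ← mul_assoc, ← mul_assoc] at hcoeff
  refine ⟨(-(4 * k : ℚ)⁻¹) • PowerSeries.coeff (2 * k) H,
    (natDegree_smul_le _ _).trans ((hdeg _).trans_eq (by ring)), ?_⟩
  have hk' : (algebraMap ℚ R[X] (4 * k)⁻¹) * (4 * k) = 1 := by
    rw [← map_ofNat (algebraMap ℚ R[X]), ← map_natCast (algebraMap ℚ R[X]), ← map_mul, ← map_mul,
      inv_mul_cancel₀ (by positivity), map_one]
  rw [LinearMap.map_smul_of_tower, show 6 * k = 3 * 2 * k by rfl, hcoeff, Algebra.smul_def, map_neg]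
  push_cast
  linear_combination qPoly a (2 * k) * hk'

end Even

section Specialization

open LaurentPolynomial (T)
open scoped LaurentPolynomial

variable {R : Type*} [CommRing R] [Algebra ℚ R]

/-- The evaluation `ℚ[T;T⁻¹] → R` at a unit of `R`, as an algebra homomorphism. -/
noncomputable def laurentAeval (a : Rˣ) : ℚ[T;T⁻¹] →ₐ[ℚ] R :=
  (LaurentPolynomial.eval₂ (algebraMap ℚ R) a).toRatAlgHom

lemma laurentAeval_T (a : Rˣ) (n : ℤ) : laurentAeval a (T n) = ↑(a ^ n) :=
  LaurentPolynomial.eval₂_T ..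

lemma laurentAeval_toLaurent (a : Rˣ) (p : ℚ[X]) :
    laurentAeval a (toLaurent p) = aeval (a : R) p :=
  LaurentPolynomial.eval₂_toLaurent ..

lemma exists_laurentAeval_mul_pow_eq (a : Rˣ) (F : ℚ[T;T⁻¹]) :
    ∃ (p : ℚ[X]) (n : ℕ), laurentAeval a F * (a : R) ^ n = aeval (a : R) p := by
  obtain ⟨n, p, hp⟩ := F.exists_T_pow
  refine ⟨p, n, ?_⟩
  rw [← laurentAeval_toLaurent, hp, map_mul, laurentAeval_T, zpow_natCast, Units.val_pow_eq_pow_val]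

lemma exists_map_laurentAeval_eq {a : Rˣ} {m : ℕ} (hm : Odd m) {P : R[X]}
    (hP : derivNum (a : R) (3 * m) P = qPoly (a : R) m) :
    ∃ P' : ℚ[T;T⁻¹][X], derivNum (T 1) (3 * m) P' = qPoly (T 1) m ∧
      P'.map (laurentAeval a : ℚ[T;T⁻¹] →+* R) = P := by
  obtain ⟨P', hP'⟩ :=
    (existsUnique_derivNum_eq_qPoly (LaurentPolynomial.isUnit_T (R := ℚ) 1) hm).exists
  have h := congr(($hP').map (laurentAeval a : ℚ[T;T⁻¹] →+* R))
  rw [map_derivNum, map_qPoly, RingHom.coe_coe, laurentAeval_T, zpow_one] at h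
  exact ⟨P', hP', (existsUnique_derivNum_eq_qPoly a.isUnit hm).unique h hP⟩

lemma coeff_eq_algebraMap_mul_of_derivNum_eq_qPoly {a : Rˣ} {m : ℕ} (hm : Odd m) {P : R[X]}
    (hP : derivNum (a : R) (3 * m) P = qPoly (a : R) m) :
    P.coeff (3 * m) = algebraMap ℚ R
      (((1 / 2) ^ m - 1) * _root_.bernoulli (m + 1) / (2 * m * (m + 1))) *
        (1 + ↑(a ^ (-m : ℤ))) := by
  obtain ⟨P', hP', rfl⟩ := exists_map_laurentAeval_eq hm hP
  rw [coeff_map, coeff_eq_of_derivNum_eq_qPoly hm hP', RingHom.coe_coe, map_smul, map_add, map_one,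
    laurentAeval_T, Algebra.smul_def]

lemma leadingCoeff_const_ne_zero {m : ℕ} (hm : Odd m) :
    ((1 / 2) ^ m - 1) * _root_.bernoulli (m + 1) / (2 * m * (m + 1) : ℚ) ≠ 0 := by
  obtain ⟨k, rfl⟩ := hm
  have hlt : (1 / 2 : ℚ) ^ (2 * k + 1) < 1 :=
    pow_lt_one₀ (by norm_num) (by norm_num) (by omega)
  exact div_ne_zero
    (mul_ne_zero (sub_ne_zero.mpr hlt.ne) (bernoulli_two_mul_ne_zero k.succ_ne_zero))
    (by positivity)

lemma leadingCoeff_const_eq {k : ℕ} (hk : 1 ≤ k) :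
    ((1 / 2) ^ (2 * k - 1) - 1) * _root_.bernoulli (2 * k - 1 + 1) /
        (2 * (2 * k - 1 : ℕ) * ((2 * k - 1 : ℕ) + 1) : ℚ) =
      ((2 : ℚ) ^ ((1 : ℤ) - 2 * (k : ℤ)) - 1) * _root_.bernoulli (2 * k) /
        (4 * (k : ℚ) * (2 * (k : ℚ) - 1)) := by
  have hexp : (1 - 2 * k : ℤ) = -(2 * k - 1 : ℕ) := by omega
  rw [hexp, zpow_neg, zpow_natCast, one_div, inv_pow, Nat.sub_add_cancel (by omega)]
  congr 1
  push_cast [show 1 ≤ 2 * k by omega]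
  ring

theorem degree_of_derivNum_eq_qPoly {a : Rˣ} {m : ℕ} (hm : Odd m) {P : R[X]}
    (ha : 1 + ((a ^ (-m : ℤ) : Rˣ) : R) ≠ 0)
    (hP : derivNum (a : R) (3 * m) P = qPoly (a : R) m) : P.degree = (3 * m : ℕ) := by
  refine degree_eq_of_le_of_coeff_ne_zero (degree_le_of_natDegree_le
    (natDegree_le_of_derivNum_eq_qPoly hm hP)) ?_
  rw [coeff_eq_algebraMap_mul_of_derivNum_eq_qPoly hm hP]
  exact ((IsUnit.mk0 _ (leadingCoeff_const_ne_zero hm)).map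
    (algebraMap ℚ R)).mul_right_eq_zero.not.mpr ha

theorem exists_coeff_mul_pow_eq_aeval_of_derivNum_eq_qPoly {a : Rˣ} {m : ℕ} (hm : Odd m) {P : R[X]}
    (hP : derivNum (a : R) (3 * m) P = qPoly (a : R) m) (i : ℕ) :
    ∃ (p : ℚ[X]) (n : ℕ), P.coeff i * (a : R) ^ n = aeval (a : R) p := by
  obtain ⟨P', -, rfl⟩ := exists_map_laurentAeval_eq hm hP
  rw [coeff_map]
  exact exists_laurentAeval_mul_pow_eq a (P'.coeff i)

end Specialization

section EvenSpecialization

variable {R : Type*} [CommRing R] [Algebra ℚ R] {a : R} {k : ℕ} {P : R[X]}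

theorem existsUnique_derivNum_eq_qPoly_two_mul (a : R) (hk : k ≠ 0) :
    ∃! P : R[X], P.degree < (6 * k : ℕ) ∧ derivNum a (6 * k) P = qPoly a (2 * k) := by
  obtain ⟨P, hdeg, hP⟩ := exists_derivNum_eq_qPoly_two_mul a hk
  have hlt : P.degree < (6 * k : ℕ) :=
    (degree_le_of_natDegree_le hdeg).trans_lt (mod_cast (by omega))
  refine ⟨P, ⟨hlt, hP⟩, fun P' ⟨hlt', hP'⟩ => sub_eq_zero.mp ?_⟩
  refine eq_zero_of_derivNum_eq_zero (a := a) (degree_sub_le _ _ |>.trans_lt (max_lt hlt' hlt)) ?_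
  rw [map_sub, hP, hP', sub_self]

theorem degree_of_derivNum_eq_qPoly_two_mul [Nontrivial R] (hk : k ≠ 0)
    (hdeg : P.degree < (6 * k : ℕ)) (hP : derivNum a (6 * k) P = qPoly a (2 * k)) :
    P.degree = (4 * k : ℕ) := by
  have hQ := natDegree_qPoly a (m := 2 * k) (by omega)
  have hne : P ≠ 0 := by
    rintro rfl
    rw [map_zero] at hP
    rw [← hP, natDegree_zero] at hQ
    omega
  have h := natDegree_derivNum a hne ((natDegree_lt_iff_degree_lt hne).mpr hdeg).ne
  rw [degree_eq_iff_natDegree_eq hne]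
  rw [hP] at h
  omega

theorem coeff_mem_range_aeval_of_derivNum_eq_qPoly_two_mul (hk : k ≠ 0)
    (hdeg : P.degree < (6 * k : ℕ)) (hP : derivNum a (6 * k) P = qPoly a (2 * k)) (i : ℕ) :
    P.coeff i ∈ (aeval a : ℚ[X] →ₐ[ℚ] R).range := by
  obtain ⟨P', ⟨hdeg', hP'⟩, -⟩ := existsUnique_derivNum_eq_qPoly_two_mul (X : ℚ[X]) hk
  have h := congr(($hP').map ((aeval a : ℚ[X] →ₐ[ℚ] R) : ℚ[X] →+* R))
  rw [map_derivNum, map_qPoly, RingHom.coe_coe, aeval_X] at h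
  have hmap : P'.map ((aeval a : ℚ[X] →ₐ[ℚ] R) : ℚ[X] →+* R) = P :=
    (existsUnique_derivNum_eq_qPoly_two_mul a hk).unique
      ⟨degree_map_le.trans_lt hdeg', h⟩ ⟨hdeg, hP⟩
  rw [← hmap, coeff_map]
  exact ⟨_, rfl⟩

end EvenSpecialization

section FunctionField

lemma algebraMap_KA_eq_aeval (p : ℚ[X]) : algebraMap ℚ[X] KA p = aeval AK p := by
  rw [AK, aeval_algebraMap_apply, aeval_X_left_apply]

lemma toKA_eq_map_aeval (P : ℚ[X][X]) : toKA P = P.map (aeval AK : ℚ[X] →ₐ[ℚ] KA) :=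
  congr_arg P.map (RingHom.ext algebraMap_KA_eq_aeval)

lemma toKA_sLag : toKA sLag = sPoly AK := (toKA_eq_map_aeval _).trans (map_aeval_sLag AK)

lemma toKA_wLag : toKA wLag = wPoly AK := (toKA_eq_map_aeval _).trans (map_aeval_wLag AK)

lemma toKA_QLag (m : ℕ) : toKA (QLag m) = qPoly AK m := toKA_eq_map_aeval _

lemma AK_ne_zero : AK ≠ 0 := RatFunc.X_ne_zero

lemma one_add_AK_zpow_ne_zero (n : ℤ) : 1 + AK ^ n ≠ 0 := by
  have hpow (m : ℕ) : AK ^ m ≠ -1 := fun h => by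
    have hpoly : (X ^ m + 1 : ℚ[X]) = 0 := by
      refine RatFunc.algebraMap_injective ℚ ?_
      rw [map_add, map_pow, map_one, map_zero, ← AK, h, neg_add_cancel]
    have := congr(eval 1 $hpoly)
    norm_num at this
  intro h
  have hneg : AK ^ n = -1 := (neg_eq_of_add_eq_zero_right h).symm
  obtain ⟨m, rfl | rfl⟩ := n.eq_nat_or_neg
  · exact hpow m (by rwa [zpow_natCast] at hneg)
  · exact hpow m (by rwa [zpow_neg, zpow_natCast, inv_eq_iff_eq_inv, inv_neg, inv_one] at hneg)

end FunctionField

end Laguerre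

open Laguerre in
theorem stmt16_general {R : Type*} [CommRing R] [Algebra ℚ R] (a : Rˣ) {k : ℕ} (hk : 1 ≤ k)
    (ha : 1 + ((a ^ (1 - 2 * k : ℤ) : Rˣ) : R) ≠ 0) :
    ((∃! P : R[X], sPoly (a : R) * derivative P - C (6 * (k : R) - 3) * (wPoly (a : R) * P) =
          qPoly (a : R) (2 * k - 1)) ∧
      (∀ P : R[X], sPoly (a : R) * derivative P - C (6 * (k : R) - 3) * (wPoly (a : R) * P) =
          qPoly (a : R) (2 * k - 1) →
        P.degree = (6 * k - 3 : ℕ) ∧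
        (∀ i : ℕ, ∃ (p : ℚ[X]) (n : ℕ), P.coeff i * (a : R) ^ n = aeval (a : R) p) ∧
        P.leadingCoeff =
          algebraMap ℚ R (((2 : ℚ) ^ ((1 : ℤ) - 2 * (k : ℤ)) - 1) * _root_.bernoulli (2 * k) /
            (4 * (k : ℚ) * (2 * (k : ℚ) - 1))) * (1 + ((a ^ (1 - 2 * k : ℤ) : Rˣ) : R)))) ∧
    ((∃! P : R[X], P.degree < (6 * k : ℕ) ∧
        sPoly (a : R) * derivative P - C (6 * (k : R)) * (wPoly (a : R) * P) =
          qPoly (a : R) (2 * k)) ∧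
      (∀ P : R[X], P.degree < (6 * k : ℕ) →
        sPoly (a : R) * derivative P - C (6 * (k : R)) * (wPoly (a : R) * P) =
          qPoly (a : R) (2 * k) →
        P.degree = (4 * k : ℕ) ∧ ∀ i : ℕ, P.coeff i ∈ (aeval (a : R) : ℚ[X] →ₐ[ℚ] R).range)) := by
  have hm : Odd (2 * k - 1) := ⟨k - 1, by omega⟩
  have hk₀ : k ≠ 0 := Nat.one_le_iff_ne_zero.mp hk
  have : Nontrivial R := ⟨_, _, ha⟩
  have hodd : 6 * (k : R) - 3 = (3 * (2 * k - 1) : ℕ) := by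
    push_cast [show 1 ≤ 2 * k by omega]
    ring
  have heven : 6 * (k : R) = (6 * k : ℕ) := by push_cast; rfl
  have hexp : (1 - 2 * k : ℤ) = -(2 * k - 1 : ℕ) := by omega
  rw [show 6 * k - 3 = 3 * (2 * k - 1) by omega, ← leadingCoeff_const_eq hk]
  simp only [hodd]
  simp only [heven, map_natCast, ← derivNum_apply]
  rw [hexp] at ha ⊢
  refine ⟨⟨existsUnique_derivNum_eq_qPoly a.isUnit hm, fun P hP => ?_⟩,
    existsUnique_derivNum_eq_qPoly_two_mul _ hk₀, fun P hdeg hP =>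
      ⟨degree_of_derivNum_eq_qPoly_two_mul hk₀ hdeg hP,
        coeff_mem_range_aeval_of_derivNum_eq_qPoly_two_mul hk₀ hdeg hP⟩⟩
  have hdeg := degree_of_derivNum_eq_qPoly hm ha hP
  refine ⟨hdeg, exists_coeff_mul_pow_eq_aeval_of_derivNum_eq_qPoly hm hP, ?_⟩
  rw [leadingCoeff, natDegree_eq_of_degree_eq_some hdeg]
  exact coeff_eq_algebraMap_mul_of_derivNum_eq_qPoly hm hP

/-- For every `k ≥ 1`:
(i) the equation `s·P′ − 3(2k−1)·w·P = Q_{2k−1}` has exactly one solution `P ∈ K[X]`;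
its degree in `X` is exactly `6k−3`, all its coefficients lie in `ℚ[A, A⁻¹]`, and its
leading coefficient is `(2^{1−2k} − 1)·B_{2k}·(1 + A^{1−2k})/(4k(2k−1))`; and
(ii) the equation `s·P′ − 6k·w·P = Q_{2k}` has exactly one solution `P ∈ K[X]` of degree
`< 6k`; its degree in `X` is exactly `4k` and all its coefficients lie in `ℚ[A]`. -/
theorem stmt16 (k : ℕ) (hk : 1 ≤ k) :
    ((∃! P : Polynomial KA,
        toKA sLag * derivative P - C (6 * (k : KA) - 3) * (toKA wLag * P) =
          toKA (QLag (2 * k - 1))) ∧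
      (∀ P : Polynomial KA,
        toKA sLag * derivative P - C (6 * (k : KA) - 3) * (toKA wLag * P) =
          toKA (QLag (2 * k - 1)) →
        P.degree = (6 * k - 3 : ℕ) ∧
        (∀ i : ℕ, ∃ (p : Polynomial ℚ) (n : ℕ),
          P.coeff i * AK ^ n = algebraMap (Polynomial ℚ) KA p) ∧
        P.leadingCoeff =
          algebraMap ℚ KA
              (((2 : ℚ) ^ ((1 : ℤ) - 2 * (k : ℤ)) - 1) * _root_.bernoulli (2 * k) /
                (4 * (k : ℚ) * (2 * (k : ℚ) - 1))) *
            (1 + AK ^ ((1 : ℤ) - 2 * (k : ℤ))))) ∧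
    ((∃! P : Polynomial KA,
        P.degree < (6 * k : ℕ) ∧
        toKA sLag * derivative P - C (6 * (k : KA)) * (toKA wLag * P) =
          toKA (QLag (2 * k))) ∧
      (∀ P : Polynomial KA,
        P.degree < (6 * k : ℕ) →
        toKA sLag * derivative P - C (6 * (k : KA)) * (toKA wLag * P) =
          toKA (QLag (2 * k)) →
        P.degree = (4 * k : ℕ) ∧
        ∀ i : ℕ, P.coeff i ∈ (algebraMap (Polynomial ℚ) KA).range)) := by
  simpa only [Laguerre.toKA_sLag, Laguerre.toKA_wLag, Laguerre.toKA_QLag,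
    Laguerre.algebraMap_KA_eq_aeval, RingHom.mem_range, AlgHom.mem_range,
    Units.val_zpow_eq_zpow_val, Units.val_mk0] using
    stmt16_general (Units.mk0 AK Laguerre.AK_ne_zero) hk
      (by simpa using Laguerre.one_add_AK_zpow_ne_zero _)
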